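/- arXiv:2407.11031 — 3 statements merged into one kernel-verified Lean document; each statement's English description precedes it below -/
import Mathlib

section
/- Fix δ ∈ (0,1), ε ∈ [0,1), constants σ > 0, λ̲ > 0, λ̄ > 0, integers k ≥ D ≥ 1, and a deterministic matrix A ∈ ℝ^{k×D} with rows a_1,…,a_k ∈ ℝ^D satisfying: (C1) for every c ∈ [−1,1]^k, ‖(1/k)Σ_{i=1}^k c_i a_i‖₂² ≤ σ²D/k; (C2) inf_{‖Δ‖₂=1} (1/k)Σ_{i=1}^k |a_iᵀΔ| ≥ λ̲; (C3) sup_{‖Δ‖₂=1} (1/k)Σ_{i=1}^k |a_iᵀΔ|² ≤ λ̄². There exists a constant c(δ) > 0 depending only on δ such that: if ( λ̄·√((D/k)·log(ek/D)) + ε·σ·√(D/k) ) / ( λ̲·(1−ε) ) ≤ c(δ), then with probability at least 1 − δ over the noise, every minimizer û of u ↦ ‖Θ − A u‖₁ over ℝ^D equals u*. -/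
open MeasureTheory ProbabilityTheory Real

noncomputable section

def dot {k : ℕ} (x y : Fin k → ℝ) : ℝ := ∑ i, x i * y i

def l2norm {k : ℕ} (x : Fin k → ℝ) : ℝ := Real.sqrt (∑ i, x i ^ 2)

/-- coordinate law `(1−ε)δ₀ + ε Q` of the mixture contamination noise. -/
def mixture (ε : ℝ) (Q : Measure ℝ) : Measure ℝ :=
  ENNReal.ofReal (1 - ε) • Measure.dirac 0 + ENNReal.ofReal ε • Q

/-!
STATEMENT 3 (exact robust ℓ₁ recovery under design conditions (C1)–(C3)):
For every `δ ∈ (0,1)` there is `c(δ) > 0` (depending only on `δ`) such that for any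
`ε ∈ [0,1)`, `σ, λ̲, λ̄ > 0`, integers `k ≥ D ≥ 1`, deterministic `A ∈ ℝ^{k×D}`
(rows `a_i`) satisfying (C1)–(C3), ground truth `u* ∈ ℝ^D`, and noise `z` with
independent coordinates `z_i ∼ (1−ε)δ₀ + ε Q_i`: if
`(λ̄ √((D/k) log(ek/D)) + ε σ √(D/k)) / (λ̲ (1−ε)) ≤ c(δ)`, then with probability
at least `1 − δ` every minimizer `û` of `u ↦ ‖Θ − A u‖₁` (where `Θ = A u* + z`)
equals `u*`.  The noise law is modeled canonically as the product of the
coordinate mixtures.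
-/

/-- splitting off the first coordinate of a finite product sum -/
lemma aux_split {α : Type} [Fintype α] {n : ℕ} (F : (Fin (n+1) → α) → ℝ) :
    ∑ s, F s = ∑ a, ∑ s : Fin n → α, F (Fin.cons a s) := by
  rw [← (Fin.consEquiv (fun _ => α)).sum_comp F, Fintype.sum_prod_type]
  rfl

lemma aux_total {α : Type} [Fintype α] : ∀ {n : ℕ} (w : Fin n → α → ℝ)
    (_ : ∀ i, ∑ a, w i a = 1), ∑ s : Fin n → α, ∏ i, w i (s i) = 1 := by
  intro n w hw
  rw [← Fintype.piFinset_univ, ← Finset.prod_univ_sum]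
  simp [hw]

/-- one coordinate symmetrization and contraction -/
lemma aux_one {α ι : Type} [Fintype α] [Fintype ι] [Nonempty ι] (w ξ : α → ℝ)
    (hw : ∀ a, 0 ≤ w a) (hw1 : ∑ a, w a = 1) (hξ : ∑ a, w a * ξ a = 0)
    (τ h : ι → ℝ) :
    ∑ a, w a * (⨆ j, (ξ a * |τ j| + h j)) ≤
      ∑ p : α × α, w p.1 * w p.2 * (⨆ j, ((ξ p.1 - ξ p.2) * τ j + h j)) := by
  have bdd : ∀ f : ι → ℝ, BddAbove (Set.range f) := fun f => (Set.finite_range f).bddAbove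
  set M : ℝ → ℝ := fun x => ⨆ j, (x * |τ j| + h j) with hM
  set N : ℝ → ℝ := fun x => ⨆ j, (x * τ j + h j) with hN
  have hMN : ∀ x, M x + M (-x) ≤ N x + N (-x) := by
    intro x
    obtain ⟨j, hj⟩ := exists_eq_ciSup_of_finite (f := fun j => x * |τ j| + h j)
    obtain ⟨l, hl⟩ := exists_eq_ciSup_of_finite (f := fun j => -x * |τ j| + h j)
    have e1 : M x = x * |τ j| + h j := hj.symm
    have e2 : M (-x) = -x * |τ l| + h l := hl.symm
    have n1 : x * τ j + h j ≤ N x := le_ciSup (bdd fun j => x * τ j + h j) j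
    have n2 : x * τ l + h l ≤ N x := le_ciSup (bdd fun j => x * τ j + h j) l
    have n3 : -x * τ j + h j ≤ N (-x) := le_ciSup (bdd fun j => -x * τ j + h j) j
    have n4 : -x * τ l + h l ≤ N (-x) := le_ciSup (bdd fun j => -x * τ j + h j) l
    have key : x * |τ j| - x * |τ l| ≤ |x * τ j - x * τ l| := by
      rw [← mul_sub, ← mul_sub, abs_mul]
      calc x * (|τ j| - |τ l|) ≤ |x * (|τ j| - |τ l|)| := le_abs_self _
        _ = |x| * |(|τ j| - |τ l|)| := abs_mul _ _
        _ ≤ _ := by exact mul_le_mul_of_nonneg_left (abs_abs_sub_abs_le _ _) (abs_nonneg x)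
    rcases abs_cases (x * τ j - x * τ l) with h | h <;> linarith
  have step1 : ∑ a, w a * M (ξ a) ≤ ∑ a, ∑ b, w a * w b * M (ξ a - ξ b) := by
    apply Finset.sum_le_sum
    intro a _
    have : M (ξ a) ≤ ∑ b, w b * M (ξ a - ξ b) := by
      apply ciSup_le
      intro j
      calc ξ a * |τ j| + h j = ∑ b, w b * ((ξ a - ξ b) * |τ j| + h j) := by
            have : ∀ b, w b * ((ξ a - ξ b) * |τ j| + h j)
              = w b * (ξ a * |τ j| + h j) - (w b * ξ b) * |τ j| := fun b => by ring
            simp only [this, Finset.sum_sub_distrib, ← Finset.sum_mul, hw1, hξ]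
            ring
        _ ≤ _ := by
            apply Finset.sum_le_sum
            intro b _
            exact mul_le_mul_of_nonneg_left
              (le_ciSup (bdd fun j => (ξ a - ξ b) * |τ j| + h j) j) (hw b)
    calc w a * M (ξ a) ≤ w a * ∑ b, w b * M (ξ a - ξ b) :=
          mul_le_mul_of_nonneg_left this (hw a)
      _ = _ := by rw [Finset.mul_sum]; simp only [mul_assoc]
  have sym : ∀ K : ℝ → ℝ, 2 * ∑ a, ∑ b, w a * w b * K (ξ a - ξ b)
      = ∑ a, ∑ b, w a * w b * (K (ξ a - ξ b) + K (-(ξ a - ξ b))) := by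
    intro K
    have : ∑ a, ∑ b, w a * w b * K (-(ξ a - ξ b)) = ∑ a, ∑ b, w a * w b * K (ξ a - ξ b) := by
      rw [Finset.sum_comm]
      refine Finset.sum_congr rfl fun a _ => Finset.sum_congr rfl fun b _ => ?_
      rw [neg_sub, mul_comm (w b)]
    simp only [mul_add, Finset.sum_add_distrib, this]
    ring
  have step2 : ∑ a, ∑ b, w a * w b * M (ξ a - ξ b) ≤ ∑ a, ∑ b, w a * w b * N (ξ a - ξ b) := by
    have : 2 * ∑ a, ∑ b, w a * w b * M (ξ a - ξ b)
        ≤ 2 * ∑ a, ∑ b, w a * w b * N (ξ a - ξ b) := by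
      rw [sym M, sym N]
      exact Finset.sum_le_sum fun a _ => Finset.sum_le_sum fun b _ =>
        mul_le_mul_of_nonneg_left (hMN _) (mul_nonneg (hw a) (hw b))
    linarith
  rw [Fintype.sum_prod_type]
  exact step1.trans step2

lemma aux_contract {α ι : Type} [Fintype α] [Fintype ι] [Nonempty ι] :
    ∀ (n : ℕ) (w ξ : Fin n → α → ℝ) (_ : ∀ i a, 0 ≤ w i a) (_ : ∀ i, ∑ a, w i a = 1)
    (_ : ∀ i, ∑ a, w i a * ξ i a = 0) (t : ι → Fin n → ℝ) (g : ι → ℝ),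
    ∑ s : Fin n → α, (∏ i, w i (s i)) * (⨆ j, (∑ i, ξ i (s i) * |t j i| + g j)) ≤
      ∑ s : Fin n → α × α, (∏ i, (w i (s i).1 * w i (s i).2)) *
        (⨆ j, (∑ i, (ξ i (s i).1 - ξ i (s i).2) * t j i + g j)) := by
  intro n
  induction n with
  | zero => intro w ξ _ _ _ t g; simp
  | succ n ih =>
    intro w ξ hw hw1 hξ t g
    rw [aux_split, aux_split]
    simp only [Fin.prod_univ_succ, Fin.sum_univ_succ, Fin.cons_zero, Fin.cons_succ]
    calc _ ≤ ∑ a, w 0 a * ∑ s : Fin n → α × α,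
            (∏ i : Fin n, (w i.succ (s i).1 * w i.succ (s i).2)) *
            (⨆ j, (∑ i : Fin n, (ξ i.succ (s i).1 - ξ i.succ (s i).2) * t j i.succ
              + (ξ 0 a * |t j 0| + g j))) := by
          apply Finset.sum_le_sum
          intro a _
          have := ih (fun i => w i.succ) (fun i => ξ i.succ) (fun i => hw _) (fun i => hw1 _)
            (fun i => hξ _) (fun j i => t j i.succ) (fun j => ξ 0 a * |t j 0| + g j)
          refine le_trans (le_of_eq ?_) (mul_le_mul_of_nonneg_left this (hw 0 a))
          rw [Finset.mul_sum]
          refine Finset.sum_congr rfl fun s _ => ?_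
          rw [mul_assoc]
          congr 3
          ext j
          ring
      _ = ∑ s : Fin n → α × α, (∏ i : Fin n, (w i.succ (s i).1 * w i.succ (s i).2)) *
            ∑ a, w 0 a * (⨆ j, (ξ 0 a * |t j 0| +
              (∑ i : Fin n, (ξ i.succ (s i).1 - ξ i.succ (s i).2) * t j i.succ + g j))) := by
          simp only [Finset.mul_sum]
          rw [Finset.sum_comm]
          refine Finset.sum_congr rfl fun s _ => Finset.sum_congr rfl fun a _ => ?_
          rw [mul_left_comm]
          congr 4
          ext j
          ring
      _ ≤ ∑ s : Fin n → α × α, (∏ i : Fin n, (w i.succ (s i).1 * w i.succ (s i).2)) *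
            ∑ p : α × α, w 0 p.1 * w 0 p.2 * (⨆ j, ((ξ 0 p.1 - ξ 0 p.2) * t j 0 +
              (∑ i : Fin n, (ξ i.succ (s i).1 - ξ i.succ (s i).2) * t j i.succ + g j))) := by
          apply Finset.sum_le_sum
          intro s _
          exact mul_le_mul_of_nonneg_left (aux_one (w 0) (ξ 0) (hw 0) (hw1 0) (hξ 0) _ _)
            (Finset.prod_nonneg fun i _ => mul_nonneg (hw _ _) (hw _ _))
      _ = _ := by
          simp only [Finset.mul_sum]
          rw [Finset.sum_comm]
          refine Finset.sum_congr rfl fun s _ => Finset.sum_congr rfl fun a _ => ?_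
          rw [mul_left_comm, mul_assoc]
          simp only [add_assoc, mul_assoc]

lemma aux_var {α : Type} [Fintype α] :
    ∀ (n : ℕ) (w x : Fin n → α → ℝ) (_ : ∀ i, ∑ a, w i a = 1)
    (_ : ∀ i, ∑ a, w i a * x i a = 0) (b : Fin n → ℝ) (c : ℝ),
    ∑ s : Fin n → α, (∏ i, w i (s i)) * (c + ∑ i, x i (s i) * b i) ^ 2
      = c ^ 2 + ∑ i, (∑ a, w i a * x i a ^ 2) * b i ^ 2 := by
  intro n
  induction n with
  | zero => intro w x _ _ b c; simp
  | succ n ih =>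
    intro w x hw hx b c
    rw [aux_split]
    simp only [Fin.prod_univ_succ, Fin.sum_univ_succ, Fin.cons_zero, Fin.cons_succ]
    have : ∀ a, ∑ s : Fin n → α, w 0 a * (∏ i : Fin n, w i.succ (s i)) *
        (c + (x 0 a * b 0 + ∑ i : Fin n, x i.succ (s i) * b i.succ)) ^ 2
        = w 0 a * ((c + x 0 a * b 0) ^ 2
          + ∑ i : Fin n, (∑ a, w i.succ a * x i.succ a ^ 2) * b i.succ ^ 2) := by
      intro a
      rw [← ih (fun i => w i.succ) (fun i => x i.succ) (fun i => hw _) (fun i => hx _),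
        Finset.mul_sum]
      refine Finset.sum_congr rfl fun s _ => ?_
      ring
    simp only [this]
    set R := ∑ i : Fin n, (∑ a, w i.succ a * x i.succ a ^ 2) * b i.succ ^ 2
    have e : ∀ a, w 0 a * ((c + x 0 a * b 0) ^ 2 + R)
        = w 0 a * (c ^ 2 + R) + (w 0 a * x 0 a) * (2 * c * b 0)
          + (w 0 a * x 0 a ^ 2) * b 0 ^ 2 := fun a => by ring
    simp only [e, Finset.sum_add_distrib, ← Finset.sum_mul, hw, hx]
    ring

lemma aux_norm {α : Type} [Fintype α] {n D : ℕ} (w x : Fin n → α → ℝ)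
    (hw0 : ∀ i a, 0 ≤ w i a) (hw : ∀ i, ∑ a, w i a = 1)
    (hx : ∀ i, ∑ a, w i a * x i a = 0) (hb : ∀ i a, x i a ^ 2 ≤ 4)
    (A : Fin n → Fin D → ℝ) (V : ℝ) (hV : ∑ i, ∑ j, A i j ^ 2 ≤ V) :
    ∑ s : Fin n → α, (∏ i, w i (s i)) * √(∑ j, (∑ i, x i (s i) * A i j) ^ 2)
      ≤ 2 * √V := by
  have hW : ∀ s : Fin n → α, 0 ≤ ∏ i, w i (s i) := fun s => Finset.prod_nonneg fun i _ => hw0 _ _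
  have h2 : ∑ s : Fin n → α, (∏ i, w i (s i)) * (∑ j, (∑ i, x i (s i) * A i j) ^ 2) ≤ 4 * V := by
    simp only [Finset.mul_sum]
    rw [Finset.sum_comm]
    have := fun j => aux_var n w x hw hx (fun i => A i j) 0
    simp only [zero_add] at this
    simp only [this, ne_eq, OfNat.ofNat_ne_zero, not_false_eq_true, zero_pow, zero_add]
    rw [Finset.sum_comm]
    refine le_trans ?_ (mul_le_mul_of_nonneg_left hV (by norm_num : (0:ℝ) ≤ 4))
    rw [Finset.mul_sum]
    refine Finset.sum_le_sum fun i _ => ?_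
    rw [Finset.mul_sum]
    refine Finset.sum_le_sum fun j _ => ?_
    have : ∑ a, w i a * x i a ^ 2 ≤ 4 := by
      calc _ ≤ ∑ a, w i a * 4 := Finset.sum_le_sum fun a _ =>
              mul_le_mul_of_nonneg_left (hb i a) (hw0 i a)
        _ = 4 := by rw [← Finset.sum_mul, hw]; norm_num
    have := mul_le_mul_of_nonneg_right this (sq_nonneg (A i j))
    simpa using this
  have h3 := Real.sum_sqrt_mul_sqrt_le (Finset.univ : Finset (Fin n → α))
    (f := fun s => ∏ i, w i (s i))
    (g := fun s => (∏ i, w i (s i)) * (∑ j, (∑ i, x i (s i) * A i j) ^ 2)) hW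
    (fun s => mul_nonneg (hW s) (Finset.sum_nonneg fun j _ => sq_nonneg _))
  rw [aux_total w hw, Real.sqrt_one, one_mul] at h3
  calc _ = _ := ?_
    _ ≤ _ := h3
    _ ≤ √(4 * V) := Real.sqrt_le_sqrt h2
    _ = 2 * √V := by
      rw [Real.sqrt_mul (by norm_num), show (4:ℝ) = 2 ^ 2 by norm_num,
        Real.sqrt_sq (by norm_num)]
  refine Finset.sum_congr rfl fun s _ => ?_
  rw [Real.sqrt_mul (hW s), ← mul_assoc, Real.mul_self_sqrt (hW s)]

lemma aux_cs {k D : ℕ} (x : Fin k → ℝ) (A : Fin k → Fin D → ℝ) (d : Fin D → ℝ)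
    (hd : l2norm d ≤ 1) :
    ∑ i, x i * dot (A i) d ≤ √(∑ j, (∑ i, x i * A i j) ^ 2) := by
  have e : ∑ i, x i * dot (A i) d = ∑ j, (∑ i, x i * A i j) * d j := by
    simp only [dot, Finset.mul_sum, Finset.sum_mul]
    rw [Finset.sum_comm]
    simp only [mul_assoc]
  rw [e]
  refine (Real.sum_mul_le_sqrt_mul_sqrt _ _ _).trans ?_
  exact mul_le_of_le_one_right (Real.sqrt_nonneg _) hd

def auxBad {k D : ℕ} (A : Fin k → Fin D → ℝ) (s : Fin k → SignType) : Prop :=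
  ∃ Δ : Fin D → ℝ, l2norm Δ = 1 ∧
    ∑ i, ((if s i = 0 then |dot (A i) Δ| else 0) - (s i : ℝ) * dot (A i) Δ) ≤ 0

lemma aux_sign_sum (f : SignType → ℝ) : ∑ a, f a = f 0 + f (-1) + f 1 := by
  have : (Finset.univ : Finset SignType) = {0, -1, 1} := by decide
  rw [this, Finset.sum_insert (by decide), Finset.sum_insert (by decide), Finset.sum_singleton]
  ring

open Classical in
lemma aux_prob {k D : ℕ} (A : Fin k → Fin D → ℝ) (ε V P B : ℝ)
    (w : Fin k → SignType → ℝ) (hw0 : ∀ i a, 0 ≤ w i a) (hw : ∀ i, ∑ a, w i a = 1)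
    (hwε : ∀ i, 1 - ε ≤ w i 0)
    (hV : ∑ i, ∑ j, A i j ^ 2 ≤ V)
    (hP : ∀ Δ : Fin D → ℝ, l2norm Δ = 1 → P ≤ ∑ i, (1 - ε) * |dot (A i) Δ|)
    (hB : ∀ m : Fin k → ℝ, (∀ i, |m i| ≤ ε) → √(∑ j, (∑ i, m i * A i j) ^ 2) ≤ B) :
    (∑ s : Fin k → SignType, if auxBad A s then ∏ i, w i (s i) else 0) * (P - B) ≤ 4 * √V := by
  have hW : ∀ s : Fin k → SignType, 0 ≤ ∏ i, w i (s i) :=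
    fun s => Finset.prod_nonneg fun i _ => hw0 _ _
  have hch : ∀ s : Fin k → SignType, ∃ d : Fin D → ℝ, (auxBad A s → l2norm d = 1 ∧
      ∑ i, ((if s i = 0 then |dot (A i) d| else 0) - (s i : ℝ) * dot (A i) d) ≤ 0) ∧
      (¬ auxBad A s → d = 0) := by
    intro s
    by_cases h : auxBad A s
    · obtain ⟨d, hd⟩ := h
      exact ⟨d, fun _ => hd, fun h' => absurd ⟨d, hd⟩ h'⟩
    · exact ⟨0, fun h' => absurd h' h, fun _ => rfl⟩
  choose d hd1 hd0 using hch
  have hd : ∀ s, l2norm (d s) ≤ 1 := by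
    intro s
    by_cases h : auxBad A s
    · exact (hd1 s h).1.le
    · rw [hd0 s h]; simp [l2norm]
  set ξ : Fin k → SignType → ℝ := fun i a => w i 0 - if a = 0 then 1 else 0 with hξ
  set m : Fin k → ℝ := fun i => ∑ a, w i a * (a : ℝ) with hm
  set y : Fin k → SignType → ℝ := fun i a => (a : ℝ) - m i with hy
  have hmε : ∀ i, |m i| ≤ ε := by
    intro i
    have h1 := hw i
    have h2 := hwε i
    have h3 := hw0 i 1
    have h4 := hw0 i (-1)
    rw [aux_sign_sum] at h1
    simp only [hm, aux_sign_sum]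
    simp only [SignType.coe_zero, SignType.coe_neg_one, SignType.coe_one]
    rw [abs_le]
    constructor <;> linarith
  have hw01 : ∀ i, w i 0 ≤ 1 := by
    intro i
    rw [← hw i]
    exact Finset.single_le_sum (fun a _ => hw0 i a) (Finset.mem_univ _)
  have hξ0 : ∀ i, ∑ a, w i a * ξ i a = 0 := by
    intro i
    simp only [hξ, mul_sub, Finset.sum_sub_distrib, ← Finset.sum_mul, hw]
    simp
  have hy0 : ∀ i, ∑ a, w i a * y i a = 0 := by
    intro i
    simp only [hy, mul_sub, Finset.sum_sub_distrib, ← Finset.sum_mul, hw, hm]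
    simp
  have hm1 : ∀ i, |m i| ≤ 1 := by
    intro i
    have h1 := hw i
    have h2 := hw0 i 0
    have h3 := hw0 i 1
    have h4 := hw0 i (-1)
    rw [aux_sign_sum] at h1
    simp only [hm, aux_sign_sum]
    simp only [SignType.coe_zero, SignType.coe_neg_one, SignType.coe_one]
    rw [abs_le]
    constructor <;> linarith
  have hy4 : ∀ i a, y i a ^ 2 ≤ 4 := by
    intro i a
    have := abs_le.1 (hm1 i)
    simp only [hy]
    cases a <;> simp <;> nlinarith
  set X : (Fin k → SignType) → ℝ :=
    fun s => ⨆ j, (∑ i, ξ i (s i) * |dot (A i) (d j)| + 0) with hX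
  set Y : (Fin k → SignType) → ℝ := fun s => √(∑ j, (∑ i, y i (s i) * A i j) ^ 2) with hY
  have hXle : ∀ s, ∑ i, ξ i (s i) * |dot (A i) (d s)| ≤ X s := by
    intro s
    have := le_ciSup (Set.finite_range
      fun j => (∑ i, ξ i (s i) * |dot (A i) (d j)| + 0)).bddAbove s
    simpa [hX] using this
  have hbad : ∀ s, (if auxBad A s then ∏ i, w i (s i) else 0) * (P - B)
      ≤ (∏ i, w i (s i)) * X s + (∏ i, w i (s i)) * Y s := by
    intro s
    rw [← mul_add]
    split_ifs with h
    · refine mul_le_mul_of_nonneg_left ?_ (hW s)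
      obtain ⟨h1, h2⟩ := hd1 s h
      have h3 := hP _ h1
      have h4 := aux_cs m A (d s) (hd s)
      have h5 := hB m hmε
      have h6 := aux_cs (fun i => y i (s i)) A (d s) (hd s)
      have h7 : ∑ i, (1 - ε) * |dot (A i) (d s)| ≤ ∑ i, w i 0 * |dot (A i) (d s)| :=
        Finset.sum_le_sum fun i _ => mul_le_mul_of_nonneg_right (hwε i) (abs_nonneg _)
      have h8 : ∑ i, ξ i (s i) * |dot (A i) (d s)| + ∑ i, y i (s i) * dot (A i) (d s)
          = ∑ i, w i 0 * |dot (A i) (d s)| - ∑ i, m i * dot (A i) (d s)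
            - ∑ i, ((if s i = 0 then |dot (A i) (d s)| else 0) - (s i : ℝ) * dot (A i) (d s)) := by
        rw [← Finset.sum_add_distrib, ← Finset.sum_sub_distrib, ← Finset.sum_sub_distrib]
        refine Finset.sum_congr rfl fun i _ => ?_
        simp only [hξ, hy]
        split_ifs <;> ring
      have h9 := hXle s
      have h10 : ∑ i, y i (s i) * dot (A i) (d s) ≤ Y s := h6
      linarith
    · rw [zero_mul]
      refine mul_nonneg (hW s) (add_nonneg ?_ (Real.sqrt_nonneg _))
      refine le_trans ?_ (hXle s)
      rw [hd0 s h]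
      simp [dot]
  have hYb : ∑ s : Fin k → SignType, (∏ i, w i (s i)) * Y s ≤ 2 * √V :=
    aux_norm w y hw0 hw hy0 hy4 A V hV
  have hXb : ∑ s : Fin k → SignType, (∏ i, w i (s i)) * X s ≤ 2 * √V := by
    refine (aux_contract k w ξ hw0 hw hξ0 (fun j i => dot (A i) (d j)) (fun _ => 0)).trans ?_
    refine le_trans ?_ (aux_norm (fun i (p : SignType × SignType) => w i p.1 * w i p.2)
      (fun i p => ξ i p.1 - ξ i p.2) (fun i p => mul_nonneg (hw0 _ _) (hw0 _ _)) ?_ ?_ ?_ A V hV)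
    · refine Finset.sum_le_sum fun s _ => ?_
      refine mul_le_mul_of_nonneg_left ?_
        (Finset.prod_nonneg fun i _ => mul_nonneg (hw0 _ _) (hw0 _ _))
      refine ciSup_le fun j => ?_
      rw [add_zero]
      exact aux_cs (fun i => ξ i (s i).1 - ξ i (s i).2) A (d j) (hd j)
    · intro i
      rw [Fintype.sum_prod_type]
      simp only [← Finset.mul_sum, hw, mul_one]
    · intro i
      rw [Fintype.sum_prod_type]
      have : ∀ a b, w i a * w i b * (ξ i a - ξ i b)
        = (w i a * ξ i a) * w i b - w i a * (w i b * ξ i b) := fun a b => by ring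
      simp only [this, Finset.sum_sub_distrib, ← Finset.mul_sum, hw, hξ0, mul_one, mul_zero,
        sub_zero]
    · intro i p
      simp only [hξ]
      split_ifs <;> norm_num
  rw [Finset.sum_mul]
  refine (Finset.sum_le_sum fun s _ => hbad s).trans ?_
  rw [Finset.sum_add_distrib]
  linarith

lemma aux_det {k D : ℕ} (A : Fin k → Fin D → ℝ) (ustar uhat : Fin D → ℝ) (z : Fin k → ℝ)
    (h : ∑ i, |dot (A i) ustar + z i - dot (A i) uhat| ≤
      ∑ i, |dot (A i) ustar + z i - dot (A i) ustar|) (hne : uhat ≠ ustar) :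
    auxBad A (fun i => SignType.sign (z i)) := by
  set N := l2norm (uhat - ustar) with hN
  have hpos : 0 < N := by
    have : ∃ j, uhat j - ustar j ≠ 0 := by
      by_contra! hc
      exact hne (funext fun j => sub_eq_zero.1 (hc j))
    obtain ⟨j, hj⟩ := this
    rw [hN, l2norm]
    apply Real.sqrt_pos.2
    have := Finset.single_le_sum (f := fun j => (uhat - ustar) j ^ 2)
      (fun a _ => sq_nonneg _) (Finset.mem_univ j)
    have h2 : 0 < (uhat j - ustar j) ^ 2 := by positivity
    exact lt_of_lt_of_le h2 this
  refine ⟨fun j => N⁻¹ * (uhat - ustar) j, ?_, ?_⟩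
  · rw [l2norm]
    simp only [mul_pow, ← Finset.mul_sum]
    rw [Real.sqrt_mul (by positivity), Real.sqrt_sq (by positivity)]
    exact inv_mul_cancel₀ hpos.ne'
  · have hdot : ∀ i, dot (A i) (fun j => N⁻¹ * (uhat - ustar) j)
        = N⁻¹ * (dot (A i) uhat - dot (A i) ustar) := by
      intro i
      simp only [dot, ← Finset.sum_sub_distrib, Finset.mul_sum, Pi.sub_apply]
      exact Finset.sum_congr rfl fun j _ => by ring
    simp only [hdot]
    have hc : ∑ i, ((if SignType.sign (z i) = 0 then |N⁻¹ * (dot (A i) uhat - dot (A i) ustar)|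
          else 0) - (SignType.sign (z i) : ℝ) * (N⁻¹ * (dot (A i) uhat - dot (A i) ustar)))
        ≤ ∑ i, N⁻¹ * (|dot (A i) ustar + z i - dot (A i) uhat|
          - |dot (A i) ustar + z i - dot (A i) ustar|) := by
      refine Finset.sum_le_sum fun i _ => ?_
      rw [abs_mul, abs_of_pos (inv_pos.2 hpos)]
      set x := dot (A i) uhat - dot (A i) ustar with hx
      have e1 : dot (A i) ustar + z i - dot (A i) uhat = z i - x := by rw [hx]; ring
      have e2 : dot (A i) ustar + z i - dot (A i) ustar = z i := by ring
      rw [e1, e2]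
      have key : (if SignType.sign (z i) = 0 then |x| else 0) - (SignType.sign (z i) : ℝ) * x
          ≤ |z i - x| - |z i| := by
        rcases lt_trichotomy (z i) 0 with hz | hz | hz
        · rw [sign_neg hz, abs_of_neg hz]
          have := neg_abs_le (z i - x)
          simp
          linarith
        · simp [hz]
        · rw [sign_pos hz, abs_of_pos hz]
          have := le_abs_self (z i - x)
          simp
          linarith
      have := mul_le_mul_of_nonneg_left key (inv_pos.2 hpos).le
      refine le_trans (le_of_eq ?_) this
      split_ifs <;> ring
    refine hc.trans ?_
    rw [← Finset.mul_sum, Finset.sum_sub_distrib]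
    exact mul_nonpos_of_nonneg_of_nonpos (inv_pos.2 hpos).le (by linarith)

theorem statement_3 (δ : ℝ) (hδ : δ ∈ Set.Ioo (0 : ℝ) 1) :
    ∃ c : ℝ, 0 < c ∧
      ∀ (ε : ℝ), 0 ≤ ε → ε < 1 →
      ∀ (σ lam lambar : ℝ), 0 < σ → 0 < lam → 0 < lambar →
      ∀ (D k : ℕ), 1 ≤ D → D ≤ k →
      ∀ (A : Fin k → Fin D → ℝ),
        -- (C1)
        (∀ cvec : Fin k → ℝ, (∀ i, |cvec i| ≤ 1) →
          l2norm (fun j => (1 / (k : ℝ)) * ∑ i : Fin k, cvec i * A i j) ^ 2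
            ≤ σ ^ 2 * D / k) →
        -- (C2)
        (∀ Δ : Fin D → ℝ, l2norm Δ = 1 →
          lam ≤ (1 / (k : ℝ)) * ∑ i : Fin k, |dot (A i) Δ|) →
        -- (C3)
        (∀ Δ : Fin D → ℝ, l2norm Δ = 1 →
          (1 / (k : ℝ)) * ∑ i : Fin k, |dot (A i) Δ| ^ 2 ≤ lambar ^ 2) →
      ∀ (Q : Fin k → Measure ℝ), (∀ i, IsProbabilityMeasure (Q i)) →
      ∀ (ustar : Fin D → ℝ),
        (lambar * Real.sqrt ((D / (k : ℝ)) * Real.log (Real.exp 1 * k / D))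
            + ε * σ * Real.sqrt (D / (k : ℝ))) / (lam * (1 - ε)) ≤ c →
        ENNReal.ofReal (1 - δ) ≤
          (Measure.pi fun i : Fin k => mixture ε (Q i))
            {z : Fin k → ℝ | ∀ uhat : Fin D → ℝ,
              (∀ u : Fin D → ℝ,
                (∑ i : Fin k, |dot (A i) ustar + z i - dot (A i) uhat|) ≤
                  ∑ i : Fin k, |dot (A i) ustar + z i - dot (A i) u|) →
              uhat = ustar} := by
  classical
  obtain ⟨hδ0, hδ1⟩ := hδ
  refine ⟨δ / 8, by positivity, ?_⟩
  intro ε hε0 hε1 σ lam lambar hσ hlam hlambar D k hD hDk A hC1 hC2 hC3 Q hQ ustar hc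
  have hk : (0:ℝ) < k := by exact_mod_cast (by omega : 0 < k)
  have hDpos : (0:ℝ) < D := by exact_mod_cast (by omega : 0 < D)
  have hDk' : (D:ℝ) ≤ k := by exact_mod_cast hDk
  set r := √((D:ℝ) / k) with hr
  have hr0 : 0 ≤ r := Real.sqrt_nonneg _
  have hr2 : r ^ 2 = D / k := Real.sq_sqrt (by positivity)
  have hL : 0 < lam * (1 - ε) := mul_pos hlam (by linarith)
  have hc' : lambar * r + ε * σ * r ≤ δ / 8 * (lam * (1 - ε)) := by
    rw [div_le_iff₀ hL] at hc
    refine le_trans ?_ hc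
    have : r ≤ √((D:ℝ) / k * Real.log (Real.exp 1 * k / D)) := by
      apply Real.sqrt_le_sqrt
      apply le_mul_of_one_le_right (by positivity)
      rw [Real.le_log_iff_exp_le (by positivity), le_div_iff₀ hDpos]
      exact mul_le_mul_of_nonneg_left hDk' (Real.exp_pos 1).le
    have := mul_le_mul_of_nonneg_left this hlambar.le
    linarith
  have : ∀ i, IsProbabilityMeasure (mixture ε (Q i)) := by
    intro i
    have := hQ i
    refine ⟨?_⟩
    simp only [mixture, Measure.coe_add, Pi.add_apply, Measure.smul_apply, measure_univ,
      smul_eq_mul, mul_one]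
    rw [← ENNReal.ofReal_add (by linarith) hε0]
    simp
  set W : Fin k → SignType → Set ℝ := fun _ a => SignType.sign ⁻¹' {a} with hWdef
  have hmeas : ∀ a : SignType, MeasurableSet ((SignType.sign : ℝ → SignType) ⁻¹' {a}) := by
    intro a
    cases a
    · have : (SignType.sign : ℝ → SignType) ⁻¹' {SignType.zero} = {0} := by
        ext x
        exact sign_eq_zero_iff
      rw [this]
      exact measurableSet_singleton _
    · have : (SignType.sign : ℝ → SignType) ⁻¹' {SignType.neg} = Set.Iio 0 := by
        ext x
        exact sign_eq_neg_one_iff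
      rw [this]
      exact measurableSet_Iio
    · have : (SignType.sign : ℝ → SignType) ⁻¹' {SignType.pos} = Set.Ioi 0 := by
        ext x
        exact sign_eq_one_iff
      rw [this]
      exact measurableSet_Ioi
  set w : Fin k → SignType → ℝ :=
    fun i a => ((mixture ε (Q i)) (SignType.sign ⁻¹' {a})).toReal with hw
  have hw0 : ∀ i a, 0 ≤ w i a := fun i a => ENNReal.toReal_nonneg
  have hw1 : ∀ i, ∑ a, w i a = 1 := by
    intro i
    simp only [hw]
    rw [← ENNReal.toReal_sum (fun a _ => measure_ne_top _ _),
      sum_measure_preimage_singleton _ (fun a _ => hmeas a)]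
    simp
  have hwε : ∀ i, 1 - ε ≤ w i 0 := by
    intro i
    simp only [hw]
    rw [← ENNReal.ofReal_le_iff_le_toReal (measure_ne_top _ _)]
    simp only [mixture, Measure.coe_add, Pi.add_apply, Measure.smul_apply, smul_eq_mul]
    rw [Measure.dirac_apply_of_mem (by simp), mul_one]
    exact le_self_add
  have hV : ∑ i, ∑ j, A i j ^ 2 ≤ (k * r * lambar) ^ 2 := by
    rw [Finset.sum_comm]
    have h1 : ∀ j, ∑ i, A i j ^ 2 ≤ k * lambar ^ 2 := by
      intro j
      have h := hC3 (Pi.single j 1) (by simp [l2norm, Pi.single_apply])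
      have e : ∀ i, dot (A i) (Pi.single j 1) = A i j := by
        intro i
        simp [dot, Pi.single_apply]
      simp only [e, sq_abs] at h
      rw [one_div, inv_mul_le_iff₀ hk] at h
      exact h
    calc _ ≤ ∑ j : Fin D, (k:ℝ) * lambar ^ 2 := Finset.sum_le_sum fun j _ => h1 j
      _ = D * (k * lambar ^ 2) := by simp
      _ = (k * r * lambar) ^ 2 := by
        rw [mul_pow, mul_pow, hr2]
        field_simp
  have hP : ∀ Δ : Fin D → ℝ, l2norm Δ = 1 →
      k * (lam * (1 - ε)) ≤ ∑ i, (1 - ε) * |dot (A i) Δ| := by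
    intro Δ hΔ
    have h := hC2 Δ hΔ
    rw [one_div, le_inv_mul_iff₀ hk] at h
    rw [← Finset.mul_sum]
    have := mul_le_mul_of_nonneg_left h (by linarith : 0 ≤ 1 - ε)
    linarith
  have hB : ∀ m : Fin k → ℝ, (∀ i, |m i| ≤ ε) →
      √(∑ j, (∑ i, m i * A i j) ^ 2) ≤ k * (ε * σ * r) := by
    intro m hm
    have h := hC1 (fun i => m i / ε) (fun i => by
      rw [abs_div, abs_of_nonneg hε0]
      exact div_le_one_of_le₀ (hm i) hε0)
    set q : Fin D → ℝ := fun j => (1 / (k : ℝ)) * ∑ i : Fin k, m i / ε * A i j with hq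
    have hql : l2norm q ≤ σ * r := by
      refine abs_le_of_sq_le_sq' ?_ (by positivity) |>.2
      rw [mul_pow, hr2, ← mul_div_assoc]
      exact h
    have e : ∀ j, ∑ i, m i * A i j = (k * ε) * q j := by
      intro j
      simp only [hq, Finset.mul_sum]
      refine Finset.sum_congr rfl fun i _ => ?_
      rcases hε0.eq_or_lt with h0 | h0
      · have : m i = 0 := by
          have := hm i
          rw [← h0] at this
          exact abs_eq_zero.1 (le_antisymm this (abs_nonneg _))
        simp [this]
      · field_simp
    simp only [e, mul_pow]
    rw [← Finset.mul_sum, Real.sqrt_mul (by positivity), ← mul_pow,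
      Real.sqrt_sq (by positivity)]
    have := mul_le_mul_of_nonneg_left hql (by positivity : 0 ≤ k * ε)
    refine this.trans (le_of_eq (by ring))
  have hmain := aux_prob A ε _ _ _ w hw0 hw1 hwε hV hP hB
  rw [Real.sqrt_sq (by positivity)] at hmain
  set p := ∑ s : Fin k → SignType, if auxBad A s then ∏ i, w i (s i) else 0 with hp
  have hpδ : p ≤ δ := by
    by_contra! hcon
    have h1 : (7 / 8) * (k * (lam * (1 - ε))) ≤ k * (lam * (1 - ε)) - k * (ε * σ * r) := by
      have : 0 ≤ lambar * r := by positivity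
      have h2 : ε * σ * r ≤ 1 / 8 * (lam * (1 - ε)) := by nlinarith
      nlinarith
    have hkL : 0 < k * (lam * (1 - ε)) := by positivity
    have h2 : δ * ((7 / 8) * (k * (lam * (1 - ε)))) ≤
        p * (k * (lam * (1 - ε)) - k * (ε * σ * r)) :=
      mul_le_mul hcon.le h1 (by positivity) (by linarith)
    have h3 : lambar * r ≤ δ / 8 * (lam * (1 - ε)) := by
      have : 0 ≤ ε * σ * r := by positivity
      linarith
    have h4 := mul_le_mul_of_nonneg_left h3 hk.le
    have h5 : 0 < δ * (k * (lam * (1 - ε))) := by positivity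
    nlinarith
  set μ := Measure.pi fun i : Fin k => mixture ε (Q i) with hμ
  set S : Set (Fin k → ℝ) := {z : Fin k → ℝ | ∀ uhat : Fin D → ℝ,
              (∀ u : Fin D → ℝ,
                (∑ i : Fin k, |dot (A i) ustar + z i - dot (A i) uhat|) ≤
                  ∑ i : Fin k, |dot (A i) ustar + z i - dot (A i) u|) →
              uhat = ustar} with hS
  have hSc : μ Sᶜ ≤ ENNReal.ofReal p := by
    have hsub : Sᶜ ⊆ ⋃ s ∈ (Finset.univ.filter fun s : Fin k → SignType => auxBad A s),
        Set.univ.pi (fun i => (SignType.sign : ℝ → SignType) ⁻¹' {s i}) := by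
      intro z hz
      simp only [hS, Set.mem_compl_iff, Set.mem_setOf_eq, not_forall] at hz
      obtain ⟨uhat, hu, hne⟩ := hz
      have := aux_det A ustar uhat z (hu ustar) hne
      simp only [Set.mem_iUnion]
      exact ⟨_, Finset.mem_filter.2 ⟨Finset.mem_univ _, this⟩, fun i _ => rfl⟩
    refine (measure_mono hsub).trans ((measure_biUnion_finset_le _ _).trans ?_)
    rw [hp, ← Finset.sum_filter, ENNReal.ofReal_sum_of_nonneg
      (fun s _ => Finset.prod_nonneg fun i _ => hw0 _ _)]
    refine Finset.sum_le_sum fun s _ => ?_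
    rw [hμ, Measure.pi_pi, ENNReal.ofReal_prod_of_nonneg (fun i _ => hw0 _ _)]
    refine le_of_eq (Finset.prod_congr rfl fun i _ => ?_)
    exact (ENNReal.ofReal_toReal (measure_ne_top _ _)).symm
  have h1 : (1 : ENNReal) ≤ μ S + ENNReal.ofReal δ := by
    calc (1 : ENNReal) = μ Set.univ := measure_univ.symm
      _ = μ (S ∪ Sᶜ) := by rw [Set.union_compl_self]
      _ ≤ μ S + μ Sᶜ := measure_union_le _ _
      _ ≤ _ := by gcongr; exact hSc.trans (ENNReal.ofReal_le_ofReal hpδ)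
  rw [ENNReal.ofReal_sub _ hδ0.le, ENNReal.ofReal_one]
  exact tsub_le_iff_right.2 h1

end
end

section
/- Fix δ ∈ (0,1) and ε ∈ [0,1). There exists a constant c(δ) > 0 depending only on δ such that: if √(mn/k)·log(ek/(mn)) / (1−ε) ≤ c(δ), then with probability at least 1 − δ (over the data and the noise), every minimizer ũ of u ↦ ‖Θ − A_W u‖₁ over ℝ^{mn} satisfies A_W ũ = W*. -/
open MeasureTheory ProbabilityTheory Real

noncomputable section

/-- `a`-th non-overlapping patch (block of `k` consecutive coordinates). -/
def patch (m k : ℕ) (a : Fin m) (v : Fin (m * k) → ℝ) (i : Fin k) : ℝ :=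
  v ⟨a.1 * k + i.1, by
    calc a.1 * k + i.1 < a.1 * k + k := Nat.add_lt_add_left i.2 _
      _ = (a.1 + 1) * k := by ring
      _ ≤ m * k := Nat.mul_le_mul_right k a.2⟩

/-- law of a standard Gaussian vector `N(0, I_d)` on `ℝ^d`. -/
def stdGaussianVec (d : ℕ) : Measure (Fin d → ℝ) :=
  Measure.pi fun _ => gaussianReal 0 1

/-- action of the hidden-layer design matrix `A_W = [P_1X, …, P_mX] ∈ ℝ^{k×mn}`
(columns: the patch vectors `P_a x_s`) on a coefficient vector `u ∈ ℝ^{mn}`. -/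
def AWapp (m n k : ℕ) (x : Fin n → Fin (m * k) → ℝ)
    (u : Fin m × Fin n → ℝ) (i : Fin k) : ℝ :=
  ∑ a : Fin m, ∑ s : Fin n, u (a, s) * patch m k a (x s) i

/-!
STATEMENT 5 (exact recovery of the hidden layer): `x_1,…,x_n` i.i.d. `N(0, I_d)`
with `d = mk`; `W* = A_W u*` (here `u*` is a measurable function of the data);
`Θ = W* + z` with mixture contamination noise independent of the data.  For each
`δ ∈ (0,1)` there is `c(δ) > 0` such that if `√(mn/k) log(ek/(mn))/(1−ε) ≤ c(δ)`
then with probability at least `1 − δ` every minimizer `ũ` of `u ↦ ‖Θ − A_W u‖₁`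
satisfies `A_W ũ = W*`.
-/

lemma exp_tail {ι : Type*} [Fintype ι] {Ω : ι → Type*} [∀ i, MeasurableSpace (Ω i)]
    (μ : ∀ i, Measure (Ω i)) [∀ i, IsProbabilityMeasure (μ i)]
    (X : ∀ i, Ω i → ℝ) (hXm : ∀ i, Measurable (X i)) (hX0 : ∀ i x, 0 ≤ X i x)
    (T : Finset ι) (q : ℝ) (hq : ∀ i ∈ T, ∫ x, exp (- X i x) ∂(μ i) ≤ q) (a : ℝ) :
    (Measure.pi μ).real {ω | ∑ i ∈ T, X i (ω i) ≤ a} ≤ exp a * q ^ T.card := by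
  classical
  let f : ∀ i, Ω i → ℝ := fun i x => if i ∈ T then exp (- X i x) else 1
  have hf : ∀ i, Measurable (f i) := by
    intro i
    by_cases h : i ∈ T
    · simp only [f, h, if_true]; exact ((hXm i).neg).exp
    · simp only [f, h, if_false]; exact measurable_const
  have hf0 : ∀ i x, 0 ≤ f i x := by
    intro i x; simp only [f]; split_ifs <;> positivity
  have hf1 : ∀ i x, f i x ≤ 1 := by
    intro i x; simp only [f]; split_ifs
    · exact Real.exp_le_one_iff.2 (by linarith [hX0 i x])
    · exact le_rfl
  have hprod : ∀ ω : ∀ i, Ω i, ∏ i, f i (ω i) = exp (-∑ i ∈ T, X i (ω i)) := by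
    intro ω
    simp only [f]
    rw [Finset.prod_ite_mem, Finset.univ_inter, ← Real.exp_sum, Finset.sum_neg_distrib]
  have hintegr : Integrable (fun ω : ∀ i, Ω i => ∏ i, f i (ω i)) (Measure.pi μ) := by
    refine Integrable.of_bound (C := 1) ?_ ?_
    · exact (Finset.measurable_prod _ fun i _ => (hf i).comp (measurable_pi_apply i)).aestronglyMeasurable
    · refine Filter.Eventually.of_forall fun ω => ?_
      rw [Real.norm_eq_abs, abs_of_nonneg (Finset.prod_nonneg fun i _ => hf0 i _)]
      exact Finset.prod_le_one (fun i _ => hf0 i _) fun i _ => hf1 i _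
  have h1 := mul_meas_ge_le_integral_of_nonneg (μ := Measure.pi μ)
    (Filter.Eventually.of_forall fun ω => Finset.prod_nonneg fun i _ => hf0 i _) hintegr (exp (-a))
  rw [integral_fintype_prod_eq_prod] at h1
  have h2 : ∏ i, ∫ x, f i x ∂(μ i) ≤ q ^ T.card := by
    calc ∏ i, ∫ x, f i x ∂(μ i) ≤ ∏ i, (if i ∈ T then q else 1) := by
          refine Finset.prod_le_prod (fun i _ => integral_nonneg fun x => hf0 i x) fun i _ => ?_
          by_cases h : i ∈ T
          · simpa [f, h] using hq i h
          · simp [f, h]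
      _ = q ^ T.card := by
          rw [Finset.prod_ite_mem, Finset.univ_inter, Finset.prod_const]
  have h3 : {ω : ∀ i, Ω i | ∑ i ∈ T, X i (ω i) ≤ a} = {ω | exp (-a) ≤ ∏ i, f i (ω i)} := by
    ext ω
    simp only [Set.mem_ofPred_eq, hprod, Real.exp_le_exp, neg_le_neg_iff]
  rw [h3]
  calc _ = exp a * (exp (-a) * (Measure.pi μ).real {ω | exp (-a) ≤ ∏ i, f i (ω i)}) := by
        rw [← mul_assoc, ← Real.exp_add]; simp
    _ ≤ _ := by gcongr; exact h1.trans h2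

abbrev γ : Measure ℝ := gaussianReal 0 1

lemma law_dot {P : Type*} [Fintype P] (w : P → ℝ) :
    (Measure.pi fun _ : P => γ).map (fun r => ∑ p, w p * r p)
      = γ.map (fun x => √(∑ p, w p ^ 2) * x) := by
  rw [gaussianReal_map_const_mul]
  have hm : Measurable (fun r : P → ℝ => ∑ p, w p * r p) := by fun_prop
  have : IsProbabilityMeasure ((Measure.pi fun _ : P => γ).map (fun r => ∑ p, w p * r p)) :=
    Measure.isProbabilityMeasure_map hm.aemeasurable
  refine Measure.ext_of_charFun ?_
  ext t
  rw [charFun_gaussianReal, charFun_apply_real, integral_map hm.aemeasurable (by fun_prop)]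
  have : ∀ r : P → ℝ, Complex.exp (t * ((∑ p, w p * r p : ℝ) : ℂ) * Complex.I)
      = ∏ p, Complex.exp (((t * w p : ℝ) : ℂ) * (r p) * Complex.I) := by
    intro r
    rw [← Complex.exp_sum]
    congr 1
    push_cast
    rw [Finset.mul_sum, Finset.sum_mul]
    refine Finset.sum_congr rfl fun p _ => by ring
  simp_rw [this]
  rw [integral_fintype_prod_eq_prod (f := fun p (x : ℝ) => Complex.exp (((t * w p : ℝ) : ℂ) * x * Complex.I))]
  simp_rw [← charFun_apply_real, charFun_gaussianReal]
  rw [← Complex.exp_sum]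
  congr 1
  have h : (√(∑ p, w p ^ 2)) ^ 2 = ∑ p, w p ^ 2 := Real.sq_sqrt (by positivity)
  push_cast
  simp only [mul_zero, zero_mul, zero_sub, mul_one, one_mul]
  rw [Finset.sum_neg_distrib]
  congr 1
  rw [show ((√(∑ p, w p ^ 2) : ℝ) : ℂ) ^ 2 = ((∑ p, w p ^ 2 : ℝ) : ℂ) by rw [← Complex.ofReal_pow, h]]
  push_cast
  rw [Finset.sum_mul, Finset.sum_div]
  refine Finset.sum_congr rfl fun p _ => by ring

def qq : ℝ := ∫ x, exp (-(|x| / 2)) ∂γ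

lemma int_exp (s : ℝ) (hs : 0 ≤ s) : Integrable (fun x => exp (-(s * |x|))) γ := by
  refine Integrable.of_bound (C := 1) (by fun_prop) (Filter.Eventually.of_forall fun x => ?_)
  rw [Real.norm_eq_abs, abs_of_nonneg (by positivity)]
  exact Real.exp_le_one_iff.2 (by have := abs_nonneg x; nlinarith)

lemma qq_pos : 0 < qq := by
  unfold qq
  have : Integrable (fun x => exp (-(|x| / 2))) γ := by
    refine (int_exp (1/2) (by norm_num)).congr (Filter.Eventually.of_forall fun x => ?_)
    simp only; ring_nf
  exact integral_exp_pos this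

lemma qq_lt_one : qq < 1 := by
  have hi : Integrable (fun x => exp (-(|x| / 2))) γ := by
    refine (int_exp (1/2) (by norm_num)).congr (Filter.Eventually.of_forall fun x => ?_)
    simp only; ring_nf
  have h0 : 0 < ∫ x, (1 - exp (-(|x| / 2))) ∂γ := by
    rw [integral_pos_iff_support_of_nonneg]
    · have : (Function.support fun x : ℝ => 1 - exp (-(|x| / 2))) = {0}ᶜ := by
        ext x
        simp [sub_eq_zero, eq_comm (a := (1:ℝ))]
      rw [this, measure_compl (measurableSet_singleton 0) (measure_ne_top _ _)]
      have hz : γ {0} = 0 :=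
        (nullSingletonClass_gaussianReal (μ := 0) (v := 1) (by norm_num)).measure_singleton 0
      rw [hz]
      simp
    · intro x
      simp
      positivity
    · exact (integrable_const _).sub hi
  rw [integral_sub (integrable_const _) hi] at h0
  simp at h0
  exact h0

lemma row_bound {P : Type*} [Fintype P] (w : P → ℝ) (hw : 1 / 4 ≤ ∑ p, w p ^ 2) :
    ∫ r, exp (-|∑ p, w p * r p|) ∂(Measure.pi fun _ : P => γ) ≤ qq := by
  have hm : Measurable (fun r : P → ℝ => ∑ p, w p * r p) := by fun_prop
  rw [← integral_map (f := fun y => exp (-|y|)) hm.aemeasurable (by fun_prop), law_dot,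
    integral_map (by fun_prop) (by fun_prop)]
  unfold qq
  have hs : 1 / 2 ≤ √(∑ p, w p ^ 2) := by
    apply Real.le_sqrt_of_sq_le; linarith
  set s := √(∑ p, w p ^ 2)
  refine integral_mono ((int_exp s (by linarith)).congr (Filter.Eventually.of_forall fun x => ?_))
    ((int_exp (1/2) (by norm_num)).congr (Filter.Eventually.of_forall fun x => ?_)) fun x => ?_
  · simp only [abs_mul]; rw [abs_of_nonneg (by linarith : 0 ≤ s)]
  · simp only; ring_nf
  · simp only [abs_mul, Real.exp_le_exp]; rw [abs_of_nonneg (by linarith : 0 ≤ s)]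
    have := abs_nonneg x; nlinarith

/-- second moment in one column -/
lemma second_moment {P : Type*} [Fintype P] {k : ℕ} (s : Fin k → ℝ) (p : P) :
    Integrable (fun G : Fin k → P → ℝ => (∑ i, s i * G i p) ^ 2)
      (Measure.pi fun _ : Fin k => Measure.pi fun _ : P => γ) ∧
    ∫ G, (∑ i, s i * G i p) ^ 2 ∂(Measure.pi fun _ : Fin k => Measure.pi fun _ : P => γ)
      = ∑ i, s i ^ 2 := by
  set μ := Measure.pi fun _ : Fin k => Measure.pi fun _ : P => γ with hμ
  let X : Fin k → (P → ℝ) → ℝ := fun i r => s i * r p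
  have hev : MeasurePreserving (fun r : P → ℝ => r p) (Measure.pi fun _ : P => γ) γ :=
    measurePreserving_eval (fun _ : P => γ) p
  have hid : MemLp (id : ℝ → ℝ) 2 γ := memLp_id_gaussianReal 2
  have hL : ∀ i, MemLp (X i) 2 (Measure.pi fun _ : P => γ) := fun i =>
    (hid.comp_measurePreserving hev).const_mul (s i)
  have hvar : ∀ i, Var[X i; Measure.pi fun _ : P => γ] = s i ^ 2 := by
    intro i
    have h1 : Var[fun r : P → ℝ => r p; Measure.pi fun _ : P => γ] = 1 := by
      have := variance_map (X := (id : ℝ → ℝ)) (Y := fun r : P → ℝ => r p)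
        (μ := Measure.pi fun _ : P => γ) (by fun_prop) hev.measurable.aemeasurable
      rw [hev.map_eq] at this
      have h2 : Var[(id : ℝ → ℝ); γ] = 1 := by simp [γ]
      rw [h2] at this
      exact this.symm
    simp only [X]
    rw [variance_const_mul, h1, mul_one]
  have hsum := variance_sum_pi (μ := fun _ : Fin k => Measure.pi fun _ : P => γ) (X := X) hL
  have hev' : ∀ i, MeasurePreserving (fun G : Fin k → P → ℝ => G i) μ (Measure.pi fun _ : P => γ) :=
    fun i => measurePreserving_eval (fun _ : Fin k => Measure.pi fun _ : P => γ) i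
  have hL' : ∀ i, MemLp (fun G : Fin k → P → ℝ => s i * G i p) 2 μ := fun i =>
    (hL i).comp_measurePreserving (hev' i)
  have hLs : MemLp (fun G : Fin k → P → ℝ => ∑ i, s i * G i p) 2 μ :=
    memLp_finsetSum _ fun i _ => hL' i
  have hmean : ∫ G, (∑ i, s i * G i p) ∂μ = 0 := by
    rw [integral_finsetSum _ fun i _ => (hL' i).integrable (by norm_num)]
    refine Finset.sum_eq_zero fun i _ => ?_
    rw [integral_const_mul]
    have : ∫ G : Fin k → P → ℝ, G i p ∂μ = 0 := by
      have hc : MeasurePreserving (fun G : Fin k → P → ℝ => G i p) μ γ := hev.comp (hev' i)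
      have := integral_map (μ := μ) hc.measurable.aemeasurable (f := (id : ℝ → ℝ)) (by fun_prop)
      rw [hc.map_eq] at this
      simp only [id] at this
      rw [← this]
      simp [γ]
    rw [this, mul_zero]
  refine ⟨hLs.integrable_sq, ?_⟩
  have h3 := variance_of_integral_eq_zero hLs.aestronglyMeasurable.aemeasurable hmean
  rw [← h3]
  simp only [hvar] at hsum
  rw [← hsum]
  congr 1
  ext G
  simp [X]

/-- Markov for a nonneg function. -/
lemma markov' {Ω : Type*} [MeasurableSpace Ω] (μ : Measure Ω) [IsProbabilityMeasure μ] (f : Ω → ℝ)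
    (hf0 : ∀ x, 0 ≤ f x) (hf : Integrable f μ) (B t : ℝ) (hB : ∫ x, f x ∂μ ≤ B) (hB0 : 0 < B)
    (ht : 0 < t) : μ.real {x | B * t⁻¹ < f x} ≤ t := by
  have h1 := mul_meas_ge_le_integral_of_nonneg (μ := μ)
    (Filter.Eventually.of_forall hf0) hf (B * t⁻¹)
  have h2 : μ.real {x | B * t⁻¹ < f x} ≤ μ.real {x | B * t⁻¹ ≤ f x} :=
    measureReal_mono (fun x hx => by
      simp only [Set.mem_ofPred_eq] at hx ⊢; exact hx.le)
  have h3 : B * t⁻¹ * μ.real {x | B * t⁻¹ ≤ f x} ≤ B * t⁻¹ * t := by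
    rw [inv_mul_cancel_right₀ ht.ne']; exact h1.trans hB
  exact h2.trans (le_of_mul_le_mul_left h3 (by positivity))

lemma cross_tail {P : Type*} [Fintype P] [Nonempty P] {k : ℕ} (hk : 0 < k) (s : Fin k → ℝ)
    (hs : ∀ i, s i ^ 2 ≤ 1) (t : ℝ) (ht : 0 < t) :
    (Measure.pi fun _ : Fin k => Measure.pi fun _ : P => γ).real
      {G | (Fintype.card P * k : ℝ) * t⁻¹ < ∑ p, (∑ i, s i * G i p) ^ 2} ≤ t := by
  refine markov' _ _ (fun G => Finset.sum_nonneg fun p _ => sq_nonneg _)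
    (integrable_finsetSum _ fun p _ => (second_moment s p).1) _ _ ?_ ?_ ht
  · rw [integral_finsetSum _ fun p _ => (second_moment s p).1]
    simp_rw [(second_moment s _).2]
    have : ∑ i, s i ^ 2 ≤ k := by
      calc ∑ i, s i ^ 2 ≤ ∑ i : Fin k, (1 : ℝ) := Finset.sum_le_sum fun i _ => hs i
        _ = k := by simp
    simp only [Finset.sum_const, Finset.card_univ, nsmul_eq_mul]
    gcongr
  · have : 0 < Fintype.card P := Fintype.card_pos
    positivity

lemma frob_tail {P : Type*} [Fintype P] [Nonempty P] {k : ℕ} (T : Finset (Fin k)) (hT : T.Nonempty)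
    (t : ℝ) (ht : 0 < t) :
    (Measure.pi fun _ : Fin k => Measure.pi fun _ : P => γ).real
      {G | (Fintype.card P * T.card : ℝ) * t⁻¹ < ∑ p, ∑ i ∈ T, G i p ^ 2} ≤ t := by
  classical
  have h : ∀ (i : Fin k) (p : P), Integrable (fun G : Fin k → P → ℝ => G i p ^ 2)
      (Measure.pi fun _ : Fin k => Measure.pi fun _ : P => γ) ∧
    ∫ G, G i p ^ 2 ∂(Measure.pi fun _ : Fin k => Measure.pi fun _ : P => γ) = 1 := by
    intro i p
    have := second_moment (k := k) (fun j => if j = i then 1 else 0) p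
    simpa using this
  refine markov' _ _ (fun G => Finset.sum_nonneg fun p _ => Finset.sum_nonneg fun i _ => sq_nonneg _)
    (integrable_finsetSum _ fun p _ => integrable_finsetSum _ fun i _ => (h i p).1) _ _ ?_ ?_ ht
  · rw [integral_finsetSum _ fun p _ => integrable_finsetSum _ fun i _ => (h i p).1]
    have : ∀ p : P, ∫ G : Fin k → P → ℝ, ∑ i ∈ T, G i p ^ 2
        ∂(Measure.pi fun _ : Fin k => Measure.pi fun _ : P => γ) = T.card := by
      intro p
      rw [integral_finsetSum _ fun i _ => (h i p).1]
      simp [(h _ p).2]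
    simp [this]
  · have : 0 < Fintype.card P := Fintype.card_pos
    have := hT.card_pos
    positivity

/-- rounding -/
lemma rounding {P ι : Type*} [DecidableEq P] (S : Finset P) (T : Finset ι) (v : P → ℝ)
    (G : ι → P → ℝ) :
    ∃ z : P → ℤ, (∀ p, |v p - z p| ≤ 1) ∧
      ∑ i ∈ T, (∑ p ∈ S, G i p * (v p - z p)) ^ 2 ≤ ∑ p ∈ S, ∑ i ∈ T, G i p ^ 2 := by
  induction S using Finset.induction_on with
  | empty => exact ⟨fun p => ⌊v p⌋, fun p => by
      rw [abs_le]; constructor <;> linarith [Int.floor_le (v p), Int.lt_floor_add_one (v p)], by simp⟩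
  | insert a S ha ih =>
    obtain ⟨z, hz, hle⟩ := ih
    obtain ⟨c, hc1, hc2⟩ : ∃ c : ℤ, |v a - c| ≤ 1 ∧
        (v a - c) * ∑ i ∈ T, G i a * (∑ p ∈ S, G i p * (v p - z p)) ≤ 0 := by
      rcases le_total 0 (∑ i ∈ T, G i a * (∑ p ∈ S, G i p * (v p - z p))) with h | h
      · refine ⟨⌊v a⌋ + 1, ?_, ?_⟩
        · push_cast
          rw [abs_le]; constructor <;> linarith [Int.floor_le (v a), Int.lt_floor_add_one (v a)]
        · push_cast
          exact mul_nonpos_of_nonpos_of_nonneg (by linarith [Int.lt_floor_add_one (v a)]) h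
      · refine ⟨⌊v a⌋, ?_, ?_⟩
        · rw [abs_le]; constructor <;> linarith [Int.floor_le (v a), Int.lt_floor_add_one (v a)]
        · exact mul_nonpos_of_nonneg_of_nonpos (by linarith [Int.floor_le (v a)]) h
    refine ⟨Function.update z a c, ?_, ?_⟩
    · intro p
      by_cases h : p = a
      · subst h; simpa using hc1
      · simpa [Function.update_of_ne h] using hz p
    · rw [Finset.sum_insert ha]
      have e1 : ∀ i, ∑ p ∈ insert a S, G i p * (v p - (Function.update z a c p : ℤ))
          = G i a * (v a - c) + ∑ p ∈ S, G i p * (v p - z p) := by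
        intro i
        rw [Finset.sum_insert ha]
        congr 1
        · simp
        · refine Finset.sum_congr rfl fun p hp => ?_
          rw [Function.update_of_ne (by rintro rfl; exact ha hp)]
      simp_rw [e1]
      have e2 : ∑ i ∈ T, (G i a * (v a - c) + ∑ p ∈ S, G i p * (v p - z p)) ^ 2
          = (v a - c) ^ 2 * ∑ i ∈ T, G i a ^ 2
            + 2 * ((v a - c) * ∑ i ∈ T, G i a * (∑ p ∈ S, G i p * (v p - z p)))
            + ∑ i ∈ T, (∑ p ∈ S, G i p * (v p - z p)) ^ 2 := by
        simp_rw [Finset.mul_sum T]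
        rw [← Finset.sum_add_distrib, ← Finset.sum_add_distrib]
        refine Finset.sum_congr rfl fun i _ => by ring
      rw [e2]
      have hsq : (v a - c) ^ 2 ≤ 1 := by rw [← sq_abs]; nlinarith [abs_nonneg (v a - c)]
      have : 0 ≤ ∑ i ∈ T, G i a ^ 2 := Finset.sum_nonneg fun _ _ => sq_nonneg _
      nlinarith

/-- lattice points in an l1 ball -/
lemma sum_half_pow (B : ℕ) : ∑ z ∈ Finset.Icc (-(B : ℤ)) B, (1 / 2 : ℝ) ^ z.natAbs ≤ 4 - 2 * (1/2) ^ B := by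
  induction B with
  | zero => norm_num
  | succ B ih =>
    have : Finset.Icc (-((B + 1 : ℕ) : ℤ)) ((B + 1 : ℕ) : ℤ)
        = insert (-((B + 1 : ℕ) : ℤ)) (insert ((B + 1 : ℕ) : ℤ) (Finset.Icc (-(B : ℤ)) B)) := by
      ext x; simp; omega
    rw [this, Finset.sum_insert, Finset.sum_insert, Int.natAbs_neg, Int.natAbs_natCast, pow_succ]
    · linarith
    · simp
    · simp; omega

def net (P : Type*) [Fintype P] [DecidableEq P] (R : ℕ) : Finset (P → ℤ) :=
  (Fintype.piFinset fun _ : P => Finset.Icc (-(R : ℤ)) R).filter fun z => ∑ p, (z p).natAbs ≤ R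

lemma mem_net {P : Type*} [Fintype P] [DecidableEq P] (R : ℕ) (z : P → ℤ)
    (h : ∑ p, (z p).natAbs ≤ R) : z ∈ net P R := by
  unfold net
  rw [Finset.mem_filter]
  refine ⟨?_, h⟩
  rw [Fintype.mem_piFinset]
  intro p
  have := Finset.single_le_sum (f := fun p => (z p).natAbs) (fun _ _ => Nat.zero_le _) (Finset.mem_univ p)
  rw [Finset.mem_Icc]; omega

lemma card_net (P : Type*) [Fintype P] [DecidableEq P] (R : ℕ) :
    ((net P R).card : ℝ) ≤ 2 ^ R * 4 ^ Fintype.card P := by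
  have h1 : ∑ z ∈ Fintype.piFinset (fun _ : P => Finset.Icc (-(R : ℤ)) R),
      ∏ p, (1 / 2 : ℝ) ^ (z p).natAbs ≤ 4 ^ Fintype.card P := by
    rw [← Finset.prod_univ_sum (fun _ : P => Finset.Icc (-(R : ℤ)) R)
      (fun _ z => (1 / 2 : ℝ) ^ z.natAbs)]
    rw [Finset.prod_const, Finset.card_univ]
    refine pow_le_pow_left₀ (Finset.sum_nonneg fun _ _ => by positivity) ?_ _
    have := sum_half_pow R
    have h : (0:ℝ) < (1/2) ^ R := by positivity
    linarith
  have h2 : ((net P R).card : ℝ) * (1 / 2) ^ R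
      ≤ ∑ z ∈ Fintype.piFinset (fun _ : P => Finset.Icc (-(R : ℤ)) R),
      ∏ p, (1 / 2 : ℝ) ^ (z p).natAbs := by
    calc ((net P R).card : ℝ) * (1 / 2) ^ R = ∑ z ∈ net P R, (1 / 2 : ℝ) ^ R := by
          rw [Finset.sum_const, nsmul_eq_mul]
      _ ≤ ∑ z ∈ net P R, ∏ p, (1 / 2 : ℝ) ^ (z p).natAbs := by
          refine Finset.sum_le_sum fun z hz => ?_
          rw [Finset.prod_pow_eq_pow_sum]
          exact pow_le_pow_of_le_one (by norm_num) (by norm_num) (Finset.mem_filter.1 hz).2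
      _ ≤ _ := Finset.sum_le_sum_of_subset_of_nonneg (Finset.filter_subset _ _)
          fun _ _ _ => by positivity
  have h3 : ((net P R).card : ℝ) = 2 ^ R * (((net P R).card : ℝ) * (1 / 2) ^ R) := by
    rw [mul_comm, mul_assoc, ← mul_pow]; norm_num
  rw [h3]
  gcongr
  exact h2.trans h1

def c0 : ℝ := -Real.log qq / 2

lemma c0_pos : 0 < c0 := by
  have := Real.log_neg qq_pos qq_lt_one
  unfold c0; linarith

lemma exp_c0 (M : ℕ) : exp (c0 * M) * qq ^ M = exp (-(c0 * M)) := by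
  have : qq = exp (-(2 * c0)) := by
    unfold c0; rw [show -(2 * (-Real.log qq / 2)) = Real.log qq by ring, Real.exp_log qq_pos]
  rw [this, ← Real.exp_nat_mul, ← Real.exp_add]
  congr 1; ring

lemma net_tail {P : Type*} [Fintype P] [DecidableEq P] [Nonempty P] {k : ℕ} (T : Finset (Fin k))
    (D R : ℕ) (hD : 0 < D) :
    (Measure.pi fun _ : Fin k => Measure.pi fun _ : P => γ).real
      {G | ∃ z ∈ net P R, (D : ℝ) ^ 2 * Fintype.card P / 4 ≤ ∑ p, (z p : ℝ) ^ 2 ∧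
        ∑ i ∈ T, |∑ p, G i p * (z p : ℝ)| ≤ c0 * T.card * (D * √(Fintype.card P))}
      ≤ (net P R).card * exp (-(c0 * T.card)) := by
  have hN : (0 : ℝ) < Fintype.card P := by exact_mod_cast Fintype.card_pos
  set ρ : ℝ := D * √(Fintype.card P) with hρ
  have hρ0 : 0 < ρ := by positivity
  have hρ2 : ρ ^ 2 = (D : ℝ) ^ 2 * Fintype.card P := by
    rw [hρ, mul_pow, Real.sq_sqrt hN.le]
  set μ := (Measure.pi fun _ : Fin k => Measure.pi fun _ : P => γ) with hμ
  let A : (P → ℤ) → Set (Fin k → P → ℝ) := fun z =>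
    {G | (D : ℝ) ^ 2 * Fintype.card P / 4 ≤ ∑ p, (z p : ℝ) ^ 2 ∧
        ∑ i ∈ T, |∑ p, G i p * (z p : ℝ)| ≤ c0 * T.card * ρ}
  have hA : ∀ z, μ.real (A z) ≤ exp (-(c0 * T.card)) := by
    intro z
    by_cases hz : (D : ℝ) ^ 2 * Fintype.card P / 4 ≤ ∑ p, (z p : ℝ) ^ 2
    · have h := exp_tail (fun _ : Fin k => Measure.pi fun _ : P => γ)
        (fun _ r => |∑ p, (z p / ρ) * r p|) (fun _ => by fun_prop) (fun _ _ => abs_nonneg _) T qq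
        (fun i _ => row_bound _ (by
          simp_rw [div_pow]
          rw [← Finset.sum_div, hρ2, le_div_iff₀ (by positivity)]
          linarith)) (c0 * T.card)
      rw [exp_c0] at h
      refine le_trans (measureReal_mono ?_) h
      intro G hG
      simp only [Set.mem_ofPred_eq, A] at hG ⊢
      have e : ∀ i, |∑ p, (z p / ρ) * G i p| = |∑ p, G i p * (z p : ℝ)| / ρ := by
        intro i
        rw [← abs_of_pos hρ0, ← abs_div, abs_of_pos hρ0, Finset.sum_div]
        congr 1
        refine Finset.sum_congr rfl fun p _ => by ring
      simp_rw [e]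
      rw [← Finset.sum_div, div_le_iff₀ hρ0]
      exact hG.2
    · have : A z = ∅ := by
        ext G; simp only [A, Set.mem_ofPred_eq, Set.mem_empty_iff_false, iff_false]
        exact fun h => hz h.1
      rw [this]; simp; positivity
  calc _ ≤ μ.real (⋃ z ∈ net P R, A z) := by
        refine measureReal_mono ?_ (measure_ne_top _ _)
        rintro G ⟨z, hz, h⟩
        simp only [Set.mem_iUnion]
        exact ⟨z, hz, h⟩
    _ ≤ ∑ z ∈ net P R, μ.real (A z) := measureReal_biUnion_finset_le _ _
    _ ≤ ∑ z ∈ net P R, exp (-(c0 * T.card)) := Finset.sum_le_sum fun z _ => hA z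
    _ = _ := by rw [Finset.sum_const, nsmul_eq_mul]

lemma determ_unit {P : Type*} [Fintype P] [DecidableEq P] [Nonempty P] {k : ℕ} (T : Finset (Fin k))
    (hT : T.Nonempty) (s : Fin k → ℝ) (G : Fin k → P → ℝ) (D : ℕ) (hD : 2 ≤ D) (τ : ℝ) (hτ : 0 ≤ τ)
    (H1 : ∑ p, (∑ i, s i * G i p) ^ 2 ≤ (Fintype.card P * k : ℝ) * τ)
    (H2 : ∑ p, ∑ i ∈ T, G i p ^ 2 ≤ (Fintype.card P * T.card : ℝ) * τ)
    (H3 : ∀ z ∈ net P ((D + 1) * Fintype.card P),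
      (D : ℝ) ^ 2 * Fintype.card P / 4 ≤ ∑ p, (z p : ℝ) ^ 2 →
      c0 * T.card * (D * √(Fintype.card P)) < ∑ i ∈ T, |∑ p, G i p * (z p : ℝ)|)
    (hn1 : 2 * √τ ≤ c0 * D)
    (hn2 : √((Fintype.card P * k : ℝ) * τ) < c0 * T.card / 2)
    (v : P → ℝ) (hv : ∑ p, v p ^ 2 = (D : ℝ) ^ 2 * Fintype.card P) :
    |∑ i, s i * ∑ p, G i p * v p| < ∑ i ∈ T, |∑ p, G i p * v p| := by
  have hN : (0 : ℝ) < Fintype.card P := by exact_mod_cast Fintype.card_pos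
  have hM : (0 : ℝ) < T.card := by exact_mod_cast hT.card_pos
  have hD' : (2 : ℝ) ≤ D := by exact_mod_cast hD
  set N : ℝ := (Fintype.card P : ℝ) with hNdef
  set M : ℝ := (T.card : ℝ) with hMdef
  obtain ⟨z, hz, hround⟩ := rounding Finset.univ T v G
  have hz2 : ∀ p, (v p - z p) ^ 2 ≤ 1 := fun p => by
    rw [← sq_abs]; nlinarith [abs_nonneg (v p - z p), hz p]
  have hzn : D ^ 2 * N / 4 ≤ ∑ p, (z p : ℝ) ^ 2 := by
    have : ∑ p, v p ^ 2 ≤ ∑ p, (2 * (z p : ℝ) ^ 2 + 2) := by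
      refine Finset.sum_le_sum fun p _ => ?_
      nlinarith [hz2 p, sq_nonneg (v p - 2 * z p)]
    rw [hv, Finset.sum_add_distrib, ← Finset.mul_sum] at this
    simp only [Finset.sum_const, Finset.card_univ, nsmul_eq_mul] at this
    rw [← hNdef] at this
    have h4 : 4 * N ≤ D ^ 2 * N := by
      have : (4 : ℝ) ≤ D ^ 2 := by nlinarith
      gcongr
    linarith
  have hv1 : ∑ p, |v p| ≤ D * N := by
    have h := sq_sum_le_card_mul_sum_sq (s := Finset.univ) (f := fun p => |v p|)
    simp only [sq_abs, Finset.card_univ] at h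
    rw [hv, ← hNdef] at h
    refine abs_le_of_sq_le_sq' (by nlinarith) (by positivity) |>.2
  have hmem : z ∈ net P ((D + 1) * Fintype.card P) := by
    apply mem_net
    have : ((∑ p, (z p).natAbs : ℕ) : ℝ) ≤ (((D + 1) * Fintype.card P : ℕ) : ℝ) := by
      push_cast
      calc ∑ p, (((z p).natAbs : ℕ) : ℝ) ≤ ∑ p, (|v p| + 1) := by
            refine Finset.sum_le_sum fun p _ => ?_
            rw [Nat.cast_natAbs, Int.cast_abs]
            have := abs_sub_abs_le_abs_sub (z p : ℝ) (v p)
            rw [abs_sub_comm] at this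
            linarith [hz p]
        _ ≤ (D + 1) * N := by
            rw [Finset.sum_add_distrib]
            simp only [Finset.sum_const, Finset.card_univ, nsmul_eq_mul]
            rw [← hNdef]; linarith
    exact_mod_cast this
  have h3 := H3 z hmem hzn
  have herr : ∑ i ∈ T, |∑ p, G i p * (v p - z p)| ≤ M * √N * √τ := by
    have h := sq_sum_le_card_mul_sum_sq (s := T) (f := fun i => |∑ p, G i p * (v p - z p)|)
    simp only [sq_abs] at h
    rw [← hMdef] at h
    refine abs_le_of_sq_le_sq' ?_ (by positivity) |>.2
    calc _ ≤ M * (N * M * τ) := h.trans (by gcongr; exact hround.trans H2)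
      _ = _ := by rw [mul_pow, mul_pow, Real.sq_sqrt hN.le, Real.sq_sqrt hτ]; ring
  have hlow : ∑ i ∈ T, |∑ p, G i p * (z p : ℝ)| ≤
      ∑ i ∈ T, |∑ p, G i p * v p| + ∑ i ∈ T, |∑ p, G i p * (v p - z p)| := by
    rw [← Finset.sum_add_distrib]
    refine Finset.sum_le_sum fun i _ => ?_
    have : ∑ p, G i p * (z p : ℝ) = ∑ p, G i p * v p - ∑ p, G i p * (v p - z p) := by
      rw [← Finset.sum_sub_distrib]; exact Finset.sum_congr rfl fun p _ => by ring
    rw [this]; exact abs_sub _ _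
  have hcross : |∑ i, s i * ∑ p, G i p * v p| ≤ D * √N * √(N * k * τ) := by
    have e : ∑ i, s i * ∑ p, G i p * v p = ∑ p, v p * ∑ i, s i * G i p := by
      simp_rw [Finset.mul_sum]
      rw [Finset.sum_comm]
      exact Finset.sum_congr rfl fun p _ => Finset.sum_congr rfl fun i _ => by ring
    rw [e]
    have h := Finset.sum_mul_sq_le_sq_mul_sq Finset.univ v (fun p => ∑ i, s i * G i p)
    refine abs_le_of_sq_le_sq ?_ (by positivity)
    rw [mul_pow, mul_pow, Real.sq_sqrt hN.le, Real.sq_sqrt (by positivity)]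
    refine h.trans ?_
    rw [hv]
    gcongr
  have hsN : 0 < √N := Real.sqrt_pos.2 hN
  have : D * √N * √(N * k * τ) < D * √N * (c0 * M / 2) := by gcongr
  have : M * √N * (2 * √τ) ≤ M * √N * (c0 * D) := by gcongr
  nlinarith

lemma determ {P : Type*} [Fintype P] [DecidableEq P] [Nonempty P] {k : ℕ} (T : Finset (Fin k))
    (hT : T.Nonempty) (s : Fin k → ℝ) (G : Fin k → P → ℝ) (D : ℕ) (hD : 2 ≤ D) (τ : ℝ) (hτ : 0 ≤ τ)
    (H1 : ∑ p, (∑ i, s i * G i p) ^ 2 ≤ (Fintype.card P * k : ℝ) * τ)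
    (H2 : ∑ p, ∑ i ∈ T, G i p ^ 2 ≤ (Fintype.card P * T.card : ℝ) * τ)
    (H3 : ∀ z ∈ net P ((D + 1) * Fintype.card P),
      (D : ℝ) ^ 2 * Fintype.card P / 4 ≤ ∑ p, (z p : ℝ) ^ 2 →
      c0 * T.card * (D * √(Fintype.card P)) < ∑ i ∈ T, |∑ p, G i p * (z p : ℝ)|)
    (hn1 : 2 * √τ ≤ c0 * D)
    (hn2 : √((Fintype.card P * k : ℝ) * τ) < c0 * T.card / 2)
    (v : P → ℝ) (hv : v ≠ 0) :
    |∑ i, s i * ∑ p, G i p * v p| < ∑ i ∈ T, |∑ p, G i p * v p| := by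
  have hN : (0 : ℝ) < Fintype.card P := by exact_mod_cast Fintype.card_pos
  have hD' : (2 : ℝ) ≤ D := by exact_mod_cast hD
  have hV : 0 < ∑ p, v p ^ 2 := by
    obtain ⟨p, hp⟩ := Function.ne_iff.1 hv
    exact Finset.sum_pos' (fun _ _ => sq_nonneg _) ⟨p, Finset.mem_univ p, by
      have : v p ≠ 0 := hp
      positivity⟩
  set α : ℝ := D * √(Fintype.card P) / √(∑ p, v p ^ 2) with hα
  have hα0 : 0 < α := by positivity
  have h := determ_unit T hT s G D hD τ hτ H1 H2 H3 hn1 hn2 (fun p => α * v p) (by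
    simp_rw [mul_pow]
    rw [← Finset.mul_sum, hα, div_pow, Real.sq_sqrt hV.le, mul_pow, Real.sq_sqrt hN.le]
    field_simp)
  have e : ∀ i, ∑ p, G i p * (α * v p) = α * ∑ p, G i p * v p := fun i => by
    rw [Finset.mul_sum]; exact Finset.sum_congr rfl fun p _ => by ring
  simp_rw [e, abs_mul, abs_of_pos hα0] at h
  rw [← Finset.mul_sum] at h
  have e2 : ∑ i, s i * (α * ∑ p, G i p * v p) = α * ∑ i, s i * ∑ p, G i p * v p := by
    rw [Finset.mul_sum]; exact Finset.sum_congr rfl fun i _ => by ring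
  rw [e2, abs_mul, abs_of_pos hα0] at h
  exact lt_of_mul_lt_mul_left h hα0.le

lemma data_good {P : Type*} [Fintype P] [DecidableEq P] [Nonempty P] {k : ℕ} (T : Finset (Fin k))
    (hT : T.Nonempty) (s : Fin k → ℝ) (hs : ∀ i, s i ^ 2 ≤ 1)
    (D : ℕ) (hD : 2 ≤ D) (t : ℝ) (ht : 0 < t) (ht1 : t ≤ 1)
    (hn1 : 2 * √(t⁻¹) ≤ c0 * D)
    (hn2 : √((Fintype.card P * k : ℝ) * t⁻¹) < c0 * T.card / 2)
    (hn3 : (D + 3 - Real.log t) * Fintype.card P ≤ c0 * T.card) :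
    (Measure.pi fun _ : Fin k => Measure.pi fun _ : P => γ).real
      {G | ¬ ∀ v : P → ℝ, v ≠ 0 →
        |∑ i, s i * ∑ p, G i p * v p| < ∑ i ∈ T, |∑ p, G i p * v p|} ≤ 3 * t := by
  have hN : (1 : ℝ) ≤ Fintype.card P := by
    exact_mod_cast (Fintype.card_pos : 0 < Fintype.card P)
  have hk : 0 < k := by obtain ⟨i, _⟩ := hT; exact i.pos
  have h1 := cross_tail (P := P) hk s hs t ht
  have h2 := frob_tail (P := P) T hT t ht
  have h3 := net_tail (P := P) T D ((D + 1) * Fintype.card P) (by omega)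
  have h4 : (net P ((D + 1) * Fintype.card P)).card * exp (-(c0 * T.card)) ≤ t := by
    have hlog : Real.log t ≤ 0 := Real.log_nonpos ht.le ht1
    have hc := card_net P ((D + 1) * Fintype.card P)
    have h2e : (2 : ℝ) ≤ exp 1 := by linarith [Real.exp_one_gt_d9]
    have : (2 : ℝ) ^ ((D + 1) * Fintype.card P) * 4 ^ Fintype.card P
        ≤ exp ((D + 3) * Fintype.card P) := by
      calc (2 : ℝ) ^ ((D + 1) * Fintype.card P) * 4 ^ Fintype.card P
          = 2 ^ ((D + 3) * Fintype.card P) := by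
            rw [show (4 : ℝ) = 2 ^ 2 by norm_num, ← pow_mul, ← pow_add]; congr 1; ring
        _ ≤ (exp 1) ^ ((D + 3) * Fintype.card P) := by gcongr
        _ = _ := by rw [← Real.exp_nat_mul]; push_cast; rw [mul_one]
    calc _ ≤ exp ((D + 3) * Fintype.card P) * exp (-(c0 * T.card)) := by
          gcongr; exact hc.trans this
      _ = exp ((D + 3) * Fintype.card P - c0 * T.card) := by rw [← Real.exp_add, sub_eq_add_neg]
      _ ≤ exp (Real.log t) := by
          apply Real.exp_le_exp.2
          nlinarith
      _ = t := Real.exp_log ht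
  refine le_trans (measureReal_mono (s₂ := _ ∪ _ ∪ _) ?_ (measure_ne_top _ _))
    ((measureReal_union_le _ _).trans ((add_le_add (measureReal_union_le _ _) le_rfl).trans
      ((add_le_add (add_le_add h1 h2) (h3.trans h4)).trans (by linarith))))
  intro G hG
  by_contra hcon
  apply hG
  simp only [Set.mem_union, Set.mem_ofPred_eq, not_or, not_lt, not_exists, not_and, not_le] at hcon
  obtain ⟨⟨ha, hb⟩, hc⟩ := hcon
  exact determ T hT s G D hD t⁻¹ (by positivity) ha hb hc hn1 hn2

/-- rows of the design matrix -/
def rows (m n k : ℕ) (x : Fin n → Fin (m * k) → ℝ) (i : Fin k) (p : Fin m × Fin n) : ℝ :=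
  patch m k p.1 (x p.2) i

lemma AWapp_eq (m n k : ℕ) (x : Fin n → Fin (m * k) → ℝ) (u : Fin m × Fin n → ℝ) (i : Fin k) :
    AWapp m n k x u i = ∑ p, rows m n k x i p * u p := by
  unfold AWapp rows
  rw [Fintype.sum_prod_type]
  exact Finset.sum_congr rfl fun a _ => Finset.sum_congr rfl fun s _ => by ring

def idxEquiv (m n k : ℕ) : Fin n × Fin (m * k) ≃ Fin k × (Fin m × Fin n) where
  toFun q := ((finProdFinEquiv.symm q.2).2, ((finProdFinEquiv.symm q.2).1, q.1))
  invFun r := (r.2.2, finProdFinEquiv (r.2.1, r.1))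
  left_inv q := by
    refine Prod.ext rfl ?_
    exact finProdFinEquiv.apply_symm_apply q.2
  right_inv r := by simp

lemma pi_curry_mp (α β : Type*) [Fintype α] [Fintype β] :
    MeasurePreserving (MeasurableEquiv.curry α β ℝ) (Measure.pi fun _ : α × β => γ)
      (Measure.pi fun _ : α => Measure.pi fun _ : β => γ) := by
  refine ⟨(MeasurableEquiv.curry α β ℝ).measurable, ?_⟩
  have := Measure.infinitePi_map_curry (fun (_ : α) (_ : β) => γ)
  simp_rw [Measure.infinitePi_eq_pi] at this
  exact this

lemma rows_mp (m n k : ℕ) :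
    MeasurePreserving (rows m n k) (Measure.pi fun _ : Fin n => stdGaussianVec (m * k))
      (Measure.pi fun _ : Fin k => Measure.pi fun _ : Fin m × Fin n => γ) := by
  have h1 := (pi_curry_mp (Fin n) (Fin (m * k))).symm
  have h2 := measurePreserving_piCongrLeft (fun _ : Fin k × (Fin m × Fin n) => γ) (idxEquiv m n k)
  have h3 := pi_curry_mp (Fin k) (Fin m × Fin n)
  have h := h3.comp (h2.comp h1)
  convert h using 1
  swap
  · rfl
  ext x i p
  simp only [Function.comp_apply, MeasurableEquiv.coe_piCongrLeft]
  change rows m n k x i p = Equiv.piCongrLeft (fun _ : Fin k × (Fin m × Fin n) => ℝ)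
    (idxEquiv m n k) (fun q => x q.1 q.2) (i, p)
  have hq := Equiv.piCongrLeft_apply_apply (fun _ : Fin k × (Fin m × Fin n) => ℝ)
    (idxEquiv m n k) (fun q => x q.1 q.2) ((idxEquiv m n k).symm (i, p))
  rw [Equiv.apply_symm_apply] at hq
  rw [hq]
  simp only [rows, patch, idxEquiv, Equiv.coe_fn_symm_mk]
  refine congrArg (x p.2) (Fin.ext ?_)
  simp [finProdFinEquiv]
  ring

lemma mixture_prob (ε : ℝ) (h0 : 0 ≤ ε) (h1 : ε < 1) (Q : Measure ℝ) [IsProbabilityMeasure Q] :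
    IsProbabilityMeasure (mixture ε Q) := by
  constructor
  simp only [mixture, Measure.add_apply, Measure.smul_apply, measure_univ, smul_eq_mul, mul_one]
  rw [← ENNReal.ofReal_add (by linarith) h0]
  simp

lemma mixture_zero (ε : ℝ) (h1 : ε < 1) (Q : Measure ℝ) [IsProbabilityMeasure (mixture ε Q)] :
    1 - ε ≤ (mixture ε Q).real {0} := by
  rw [measureReal_def, ← ENNReal.ofReal_le_iff_le_toReal (measure_ne_top _ _)]
  simp [mixture]

lemma noise_tail (ε : ℝ) (h0 : 0 ≤ ε) (h1 : ε < 1) (k : ℕ) (Q : Fin k → Measure ℝ)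
    (hQ : ∀ i, IsProbabilityMeasure (Q i)) :
    (Measure.pi fun i : Fin k => mixture ε (Q i)).real
      {z | ((Finset.univ.filter fun i => z i = 0).card : ℝ) ≤ (1 - ε) * k / 2}
      ≤ exp (-((1 - ε) * k / 10)) := by
  have := fun i => mixture_prob ε h0 h1 (Q i)
  have hq : ∀ i, ∫ x, exp (-({0} : Set ℝ).indicator 1 x) ∂(mixture ε (Q i))
      ≤ exp (-(6 / 10 * (1 - ε))) := by
    intro i
    have e : ∀ x : ℝ, exp (-({0} : Set ℝ).indicator 1 x)
        = 1 - ({0} : Set ℝ).indicator (fun _ => 1 - exp (-1)) x := by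
      intro x
      by_cases hx : x = 0 <;> simp [hx]
    simp_rw [e]
    rw [integral_sub (integrable_const _)
      ((integrable_const _).indicator (measurableSet_singleton 0)),
      integral_indicator_const _ (measurableSet_singleton 0)]
    simp only [integral_const, probReal_univ, smul_eq_mul, mul_one]
    have hz := mixture_zero ε h1 (Q i)
    have he : exp (-1) ≤ 4 / 10 := by linarith [Real.exp_neg_one_lt_d9]
    have := Real.add_one_le_exp (-(6 / 10 * (1 - ε)))
    nlinarith
  have h := exp_tail (fun i : Fin k => mixture ε (Q i)) (fun _ => ({0} : Set ℝ).indicator 1)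
    (fun _ => measurable_one.indicator (measurableSet_singleton 0))
    (fun _ x => Set.indicator_nonneg (fun _ _ => zero_le_one) x) Finset.univ
    (exp (-(6 / 10 * (1 - ε)))) (fun i _ => hq i) ((1 - ε) * k / 2)
  have hs : ∀ z : Fin k → ℝ, ∑ i, ({0} : Set ℝ).indicator (1 : ℝ → ℝ) (z i)
      = ((Finset.univ.filter fun i => z i = 0).card : ℝ) := by
    intro z
    simp [Set.indicator_apply]
  simp_rw [hs] at h
  refine h.trans (le_of_eq ?_)
  rw [← Real.exp_nat_mul, ← Real.exp_add]
  congr 1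
  simp only [Finset.card_univ, Fintype.card_fin]
  ring

lemma recover {m n k : ℕ} (x : Fin n → Fin (m * k) → ℝ) (us ut : Fin m × Fin n → ℝ) (z : Fin k → ℝ)
    (hgood : ∀ v : Fin m × Fin n → ℝ, v ≠ 0 →
        |∑ i, ((SignType.sign (z i) : SignType) : ℝ) * ∑ p, rows m n k x i p * v p|
          < ∑ i ∈ Finset.univ.filter (fun i => z i = 0), |∑ p, rows m n k x i p * v p|)
    (hmin : (∑ i : Fin k, |AWapp m n k x us i + z i - AWapp m n k x ut i|) ≤
                  ∑ i : Fin k, |AWapp m n k x us i + z i - AWapp m n k x us i|) :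
    ut = us := by
  by_contra hne
  have h := hgood (ut - us) (sub_ne_zero.2 hne)
  have e : ∀ i, AWapp m n k x us i + z i - AWapp m n k x ut i
      = z i - ∑ p, rows m n k x i p * (ut - us) p := by
    intro i
    rw [AWapp_eq, AWapp_eq, add_sub_right_comm, ← Finset.sum_sub_distrib, sub_eq_add_neg (z i),
      ← Finset.sum_neg_distrib, add_comm]
    congr 1
    exact Finset.sum_congr rfl fun p _ => by simp only [Pi.sub_apply]; ring
  simp_rw [e, add_sub_cancel_left] at hmin
  set a : Fin k → ℝ := fun i => ∑ p, rows m n k x i p * (ut - us) p with ha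
  have hpt : ∀ i, |z i| - ((SignType.sign (z i) : SignType) : ℝ) * a i + (if z i = 0 then |a i| else 0)
      ≤ |z i - a i| := by
    intro i
    rcases lt_trichotomy (z i) 0 with hz | hz | hz
    · simp only [sign_neg hz, hz.ne, if_false, abs_of_neg hz]
      have := neg_abs_le (z i - a i)
      simp; linarith
    · simp [hz]
    · simp only [sign_pos hz, hz.ne', if_false, abs_of_pos hz]
      have := le_abs_self (z i - a i)
      simp; linarith
  have hsum := Finset.sum_le_sum fun i (_ : i ∈ Finset.univ) => hpt i
  rw [Finset.sum_add_distrib, Finset.sum_sub_distrib, ← Finset.sum_filter] at hsum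
  have := le_abs_self (∑ i, ((SignType.sign (z i) : SignType) : ℝ) * a i)
  have h' : |∑ i, ((SignType.sign (z i) : SignType) : ℝ) * a i|
    < ∑ i ∈ Finset.univ.filter (fun i => z i = 0), |a i| := h
  linarith

lemma numerics (c ε : ℝ) (m n k : ℕ) (hm : 0 < m) (hn : 0 < n) (hk : 0 < k) (hmn : m * n ≤ k)
    (h1 : ε < 1)
    (h : Real.sqrt ((m * n : ℝ) / k) * Real.log (Real.exp 1 * k / (m * n : ℝ)) / (1 - ε) ≤ c) :
    Real.sqrt ((m * n : ℝ) / k) ≤ c * (1 - ε) := by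
  rw [div_le_iff₀ (by linarith)] at h
  refine le_trans ?_ h
  have hk' : (0:ℝ) < k := by exact_mod_cast hk
  have hN : (0:ℝ) < m * n := by exact_mod_cast Nat.mul_pos hm hn
  have hle : (m * n : ℝ) ≤ k := by exact_mod_cast hmn
  have : 1 ≤ Real.log (Real.exp 1 * k / (m * n : ℝ)) := by
    rw [Real.le_log_iff_exp_le (by positivity), le_div_iff₀ hN]
    gcongr
  exact le_mul_of_one_le_right (Real.sqrt_nonneg _) this

theorem statement_5 (δ : ℝ) (hδ : δ ∈ Set.Ioo (0 : ℝ) 1) :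
    ∃ c : ℝ, 0 < c ∧
      ∀ (ε : ℝ), 0 ≤ ε → ε < 1 →
      ∀ (m n k : ℕ), 0 < m → 0 < n → 0 < k → m * n ≤ k →
      ∀ (Q : Fin k → Measure ℝ), (∀ i, IsProbabilityMeasure (Q i)) →
      ∀ (ustar : (Fin n → Fin (m * k) → ℝ) → (Fin m × Fin n → ℝ)),
        Measurable ustar →
        Real.sqrt ((m * n : ℝ) / k) * Real.log (Real.exp 1 * k / (m * n : ℝ))
            / (1 - ε) ≤ c →
        ENNReal.ofReal (1 - δ) ≤
          ((Measure.pi fun _ : Fin n => stdGaussianVec (m * k)).prod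
              (Measure.pi fun i : Fin k => mixture ε (Q i)))
            {ω : (Fin n → Fin (m * k) → ℝ) × (Fin k → ℝ) |
              ∀ utilde : Fin m × Fin n → ℝ,
                (∀ u : Fin m × Fin n → ℝ,
                  (∑ i : Fin k,
                    |AWapp m n k ω.1 (ustar ω.1) i + ω.2 i - AWapp m n k ω.1 utilde i|) ≤
                  ∑ i : Fin k,
                    |AWapp m n k ω.1 (ustar ω.1) i + ω.2 i - AWapp m n k ω.1 u i|) →
                ∀ i : Fin k, AWapp m n k ω.1 utilde i = AWapp m n k ω.1 (ustar ω.1) i} := by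
  obtain ⟨hδ0, hδ1⟩ := hδ
  obtain ⟨t, ht⟩ : ∃ t : ℝ, t = δ / 4 := ⟨_, rfl⟩
  have ht0 : 0 < t := by linarith
  have ht1 : t ≤ 1 := by linarith
  have hlog : Real.log t ≤ 0 := Real.log_nonpos ht0.le ht1
  have hc0 := c0_pos
  obtain ⟨D, hD2, hDn⟩ : ∃ D : ℕ, 2 ≤ D ∧ 2 * √(t⁻¹) ≤ c0 * D := by
    refine ⟨⌈2 * √(t⁻¹) / c0⌉₊ + 2, by omega, ?_⟩
    have := Nat.le_ceil (2 * √(t⁻¹) / c0)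
    rw [div_le_iff₀ hc0] at this
    push_cast
    nlinarith
  have hst : 0 < √(t⁻¹) := Real.sqrt_pos.2 (by positivity)
  have hA : 0 < (D : ℝ) + 3 - Real.log t := by
    have : (0:ℝ) ≤ D := Nat.cast_nonneg D
    linarith
  obtain ⟨c, hcpos, hcone, hca, hcb, hcc⟩ : ∃ c : ℝ, 0 < c ∧ c ≤ 1 ∧ c * √(t⁻¹) ≤ c0 / 8 ∧
      c * ((D : ℝ) + 3 - Real.log t) ≤ c0 / 2 ∧ c * (-Real.log t) ≤ 1 / 10 := by
    refine ⟨min (min 1 (c0 / 8 / √(t⁻¹))) (min (c0 / 2 / ((D : ℝ) + 3 - Real.log t))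
      (1 / 10 / (1 - Real.log t))), ?_, ?_, ?_, ?_, ?_⟩
    · have : 0 < 1 - Real.log t := by linarith
      positivity
    · exact (min_le_left _ _).trans (min_le_left _ _)
    · rw [← le_div_iff₀ hst]; exact (min_le_left _ _).trans (min_le_right _ _)
    · rw [← le_div_iff₀ hA]; exact (min_le_right _ _).trans (min_le_left _ _)
    · have h1 : 0 < 1 - Real.log t := by linarith
      have h2 : min (min 1 (c0 / 8 / √(t⁻¹))) (min (c0 / 2 / ((D : ℝ) + 3 - Real.log t))
        (1 / 10 / (1 - Real.log t))) ≤ 1 / 10 / (1 - Real.log t) :=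
        (min_le_right _ _).trans (min_le_right _ _)
      calc _ ≤ 1 / 10 / (1 - Real.log t) * (-Real.log t) := by gcongr; linarith
        _ ≤ 1 / 10 / (1 - Real.log t) * (1 - Real.log t) := by gcongr; linarith
        _ = 1 / 10 := by field_simp
  refine ⟨c, hcpos, ?_⟩
  intro ε hε0 hε1 m n k hm hn hk hmn Q hQ ustar _ hcond
  have hρ := numerics c ε m n k hm hn hk hmn hε1 hcond
  clear hcond
  have hk' : (0:ℝ) < k := by exact_mod_cast hk
  have hN1 : (1:ℝ) ≤ m * n := by exact_mod_cast Nat.mul_pos hm hn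
  have hη : 0 < 1 - ε := by linarith
  have hη1 : 1 - ε ≤ 1 := by linarith
  have hNk : (m * n : ℝ) ≤ c * ((1 - ε) * k) := by
    have h1 : (m * n : ℝ) / k ≤ (c * (1 - ε)) ^ 2 := (Real.sqrt_le_left (by positivity)).1 hρ
    rw [div_le_iff₀ hk'] at h1
    have h2 : (c * (1 - ε)) ^ 2 ≤ c * (1 - ε) := by
      have : c * (1 - ε) ≤ 1 := mul_le_one₀ hcone hη.le hη1
      have h0 : 0 < c * (1 - ε) := by positivity
      nlinarith
    calc (m * n : ℝ) ≤ _ := h1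
      _ ≤ c * (1 - ε) * k := by gcongr
      _ = _ := by ring
  have hnoise : exp (-((1 - ε) * k / 10)) ≤ t := by
    rw [← Real.exp_log ht0, Real.exp_le_exp]
    have h1 : 1 ≤ c * ((1 - ε) * k) := hN1.trans hNk
    have h2 : c * (-Real.log t) ≤ c * ((1 - ε) * k / 10) := by linarith
    have := le_of_mul_le_mul_left h2 hcpos
    linarith
  have : Nonempty (Fin m × Fin n) := ⟨(⟨0, hm⟩, ⟨0, hn⟩)⟩
  have hcard : ((Fintype.card (Fin m × Fin n) : ℕ) : ℝ) = m * n := by simp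
  have hprob := fun i => mixture_prob ε hε0 hε1 (Q i)
  have : IsProbabilityMeasure (stdGaussianVec (m * k)) := by unfold stdGaussianVec; infer_instance
  set μ := Measure.pi fun _ : Fin n => stdGaussianVec (m * k) with hμ
  set ν := Measure.pi fun i : Fin k => mixture ε (Q i) with hν
  -- data bad sets
  let Z : (Fin k → SignType) → Finset (Fin k) := fun σ => Finset.univ.filter fun i => σ i = 0
  let BadG : (Fin k → SignType) → Set (Fin k → Fin m × Fin n → ℝ) := fun σ =>
    {G | ¬ ∀ v : Fin m × Fin n → ℝ, v ≠ 0 →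
        |∑ i, ((σ i : SignType) : ℝ) * ∑ p, G i p * v p| < ∑ i ∈ Z σ, |∑ p, G i p * v p|}
  have hbad : ∀ σ, (1 - ε) * k / 2 < ((Z σ).card : ℝ) →
      μ (rows m n k ⁻¹' BadG σ) ≤ ENNReal.ofReal (3 * t) := by
    intro σ hσ
    have hZ : (Z σ).Nonempty := by
      rw [← Finset.card_pos]
      have : (0:ℝ) < (Z σ).card := lt_trans (by positivity) hσ
      exact_mod_cast this
    have h := data_good (P := Fin m × Fin n) (Z σ) hZ (fun i => ((σ i : SignType) : ℝ))
      (fun i => by rcases σ i with _ | _ | _ <;> simp) D hD2 t ht0 ht1 hDn ?_ ?_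
    · calc μ (rows m n k ⁻¹' BadG σ) ≤ (μ.map (rows m n k)) (BadG σ) :=
            Measure.le_map_apply (rows_mp m n k).measurable.aemeasurable _
        _ = (Measure.pi fun _ : Fin k => Measure.pi fun _ : Fin m × Fin n => γ) (BadG σ) := by
            rw [(rows_mp m n k).map_eq]
        _ ≤ ENNReal.ofReal (3 * t) := by
            rw [← ENNReal.ofReal_toReal (measure_ne_top _ (BadG σ))]
            exact ENNReal.ofReal_le_ofReal h
    · rw [hcard, Real.sqrt_mul (by positivity)]
      have e : √((m * n : ℝ) * k) = k * √((m * n : ℝ) / k) := by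
        rw [show (m * n : ℝ) * k = k ^ 2 * ((m * n : ℝ) / k) by field_simp,
          Real.sqrt_mul (by positivity), Real.sqrt_sq hk'.le]
      rw [e]
      calc k * √((m * n : ℝ) / k) * √(t⁻¹) ≤ k * (c * (1 - ε)) * √(t⁻¹) := by gcongr
        _ = (1 - ε) * k * (c * √(t⁻¹)) := by ring
        _ ≤ (1 - ε) * k * (c0 / 8) := by gcongr
        _ < c0 * (Z σ).card / 2 := by
          have : 0 < (1 - ε) * k := by positivity
          nlinarith
    · rw [hcard]
      calc ((D : ℝ) + 3 - Real.log t) * (m * n) ≤ ((D : ℝ) + 3 - Real.log t) * (c * ((1 - ε) * k)) := by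
            gcongr
        _ = (c * ((D : ℝ) + 3 - Real.log t)) * ((1 - ε) * k) := by ring
        _ ≤ c0 / 2 * ((1 - ε) * k) := by gcongr
        _ ≤ c0 * (Z σ).card := by nlinarith
  let E : (Fin k → SignType) → Set (Fin k → ℝ) := fun σ => {z | (fun i => SignType.sign (z i)) = σ}
  have hEm : ∀ σ, MeasurableSet (E σ) := by
    intro σ
    have hE : E σ = ⋂ i, (fun z : Fin k → ℝ => z i) ⁻¹' {x | SignType.sign x = σ i} := by
      ext z
      simp only [E, Set.mem_ofPred_eq, Set.mem_iInter, Set.mem_preimage]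
      exact funext_iff
    rw [hE]
    refine MeasurableSet.iInter fun i => measurable_pi_apply i ?_
    rcases σ i with _ | _ | _
    · have : {x : ℝ | SignType.sign x = SignType.zero} = {0} := by
        ext x; exact sign_eq_zero_iff
      rw [this]; exact measurableSet_singleton 0
    · have : {x : ℝ | SignType.sign x = SignType.neg} = Set.Iio 0 := by
        ext x; exact sign_eq_neg_one_iff
      rw [this]; exact measurableSet_Iio
    · have : {x : ℝ | SignType.sign x = SignType.pos} = Set.Ioi 0 := by
        ext x; exact sign_eq_one_iff
      rw [this]; exact measurableSet_Ioi
  have hEsum : ∑ σ, ν (E σ) ≤ 1 := by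
    rw [← measure_biUnion_finset ?_ fun σ _ => hEm σ]
    · exact prob_le_one
    · intro σ _ σ' _ hne
      rw [Function.onFun, Set.disjoint_left]
      intro z h1 h2
      exact hne (h1.symm.trans h2)
  let B0 : Set (Fin k → ℝ) :=
    {z | ((Finset.univ.filter fun i => z i = 0).card : ℝ) ≤ (1 - ε) * k / 2}
  have hB0 : ν B0 ≤ ENNReal.ofReal t := by
    rw [← ENNReal.ofReal_toReal (measure_ne_top ν B0)]
    exact ENNReal.ofReal_le_ofReal ((noise_tail ε hε0 hε1 k Q hQ).trans hnoise)
  set S : Set ((Fin n → Fin (m * k) → ℝ) × (Fin k → ℝ)) := {ω |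
              ∀ utilde : Fin m × Fin n → ℝ,
                (∀ u : Fin m × Fin n → ℝ,
                  (∑ i : Fin k,
                    |AWapp m n k ω.1 (ustar ω.1) i + ω.2 i - AWapp m n k ω.1 utilde i|) ≤
                  ∑ i : Fin k,
                    |AWapp m n k ω.1 (ustar ω.1) i + ω.2 i - AWapp m n k ω.1 u i|) →
                ∀ i : Fin k, AWapp m n k ω.1 utilde i = AWapp m n k ω.1 (ustar ω.1) i} with hS
  let F : Finset (Fin k → SignType) := Finset.univ.filter fun σ => (1 - ε) * k / 2 < ((Z σ).card : ℝ)
  have hcover : Sᶜ ⊆ (Set.univ ×ˢ B0) ∪ ⋃ σ ∈ F, (rows m n k ⁻¹' BadG σ) ×ˢ E σ := by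
    rintro ⟨x, z⟩ hxz
    by_contra hcon
    apply hxz
    have hz0 : ∀ i, SignType.sign (z i) = 0 ↔ z i = 0 := fun i => sign_eq_zero_iff
    rw [Set.mem_union, not_or] at hcon
    obtain ⟨hc1, hc2⟩ := hcon
    have hc1' : (1 - ε) * k / 2 < ((Finset.univ.filter fun i => z i = 0).card : ℝ) := by
      by_contra hh
      exact hc1 ⟨Set.mem_univ _, not_lt.1 hh⟩
    have hZe : Z (fun i => SignType.sign (z i)) = Finset.univ.filter fun i => z i = 0 := by
      simp only [Z, hz0]
    have hgood : x ∉ rows m n k ⁻¹' BadG (fun i => SignType.sign (z i)) := by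
      intro hx
      apply hc2
      simp only [Set.mem_iUnion]
      refine ⟨fun i => SignType.sign (z i), ?_, hx, rfl⟩
      simp only [F, Finset.mem_filter, Finset.mem_univ, true_and]
      rw [hZe]; exact hc1'
    have hgood' := not_not.1 hgood
    rw [hZe] at hgood'
    intro ut hut i
    rw [recover x (ustar x) ut z hgood' (hut (ustar x))]
  have hcompl : (μ.prod ν) Sᶜ ≤ ENNReal.ofReal δ := by
    calc (μ.prod ν) Sᶜ ≤ (μ.prod ν) ((Set.univ ×ˢ B0) ∪ ⋃ σ ∈ F, (rows m n k ⁻¹' BadG σ) ×ˢ E σ) :=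
          measure_mono hcover
      _ ≤ (μ.prod ν) (Set.univ ×ˢ B0) + ∑ σ ∈ F, (μ.prod ν) ((rows m n k ⁻¹' BadG σ) ×ˢ E σ) :=
          (measure_union_le _ _).trans (add_le_add le_rfl (measure_biUnion_finset_le _ _))
      _ ≤ ENNReal.ofReal t + ∑ σ ∈ F, ENNReal.ofReal (3 * t) * ν (E σ) := by
          refine add_le_add ?_ (Finset.sum_le_sum fun σ hσ => ?_)
          · rw [Measure.prod_prod, measure_univ, one_mul]; exact hB0
          · rw [Measure.prod_prod]
            exact mul_le_mul_left (hbad σ (Finset.mem_filter.1 hσ).2) _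
      _ ≤ ENNReal.ofReal t + ENNReal.ofReal (3 * t) * 1 := by
          rw [← Finset.mul_sum]
          gcongr
          exact (Finset.sum_le_sum_of_subset (Finset.subset_univ F)).trans hEsum
      _ = ENNReal.ofReal δ := by
          rw [mul_one, ← ENNReal.ofReal_add ht0.le (by positivity)]
          congr 1; linarith
  have hone : 1 ≤ (μ.prod ν) S + (μ.prod ν) Sᶜ := by
    rw [← measure_univ (μ := μ.prod ν), ← Set.union_compl_self S]
    exact measure_union_le _ _
  rw [ENNReal.ofReal_sub _ hδ0.le, ENNReal.ofReal_one]
  exact tsub_le_iff_right.2 (hone.trans (add_le_add le_rfl hcompl))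

end
end

section
/- Let U, V, Z be i.i.d. standard normal random variables and for ρ ∈ [0,1] define f(ρ) = E[ max(0, √(1−ρ)·U + √ρ·Z) · max(0, √(1−ρ)·V + √ρ·Z) ]. Then: (i) f(0) = 1/(2π); (ii) f is right-differentiable at 0 with f′(0) = 1/4; and (iii) there exists a constant C > 0 such that |f(ρ) − 1/(2π) − ρ/4| ≤ C·ρ² for all ρ ∈ [0, 1/5]. -/
open MeasureTheory ProbabilityTheory Real

noncomputable section

def relu (t : ℝ) : ℝ := max 0 t

/-- law of three i.i.d. standard normals `(U, V, Z) = (u 0, u 1, u 2)`. -/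
def stdGaussian3 : Measure (Fin 3 → ℝ) :=
  Measure.pi fun _ => gaussianReal 0 1

/-- the ReLU (arc-cosine) kernel of a correlated standard Gaussian pair:
`f ρ = E[ψ(√(1−ρ)U + √ρZ) ψ(√(1−ρ)V + √ρZ)]`. -/
def reluKernel (ρ : ℝ) : ℝ :=
  ∫ u, relu (Real.sqrt (1 - ρ) * u 0 + Real.sqrt ρ * u 2) *
       relu (Real.sqrt (1 - ρ) * u 1 + Real.sqrt ρ * u 2) ∂stdGaussian3

/-- the standard normal density at zero -/
def cA : ℝ := (√(2 * π))⁻¹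

/-- the standard normal law on the line -/
abbrev gam : Measure ℝ := gaussianReal 0 1

lemma cA_sq : cA ^ 2 = 1 / (2 * π) := by
  unfold cA
  rw [inv_pow, Real.sq_sqrt (by positivity), one_div]

lemma cA_pos : 0 < cA := by unfold cA; positivity

lemma cA_le_one : cA ≤ 1 := by
  have h : cA ^ 2 ≤ 1 := by
    rw [cA_sq, div_le_one (by positivity)]
    linarith [Real.pi_gt_three]
  nlinarith [cA_pos]

lemma pdf_eq (x : ℝ) : gaussianPDFReal 0 1 x = cA * exp (-(1 / 2) * x ^ 2) := by
  simp only [gaussianPDFReal_def, cA]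
  norm_num
  left
  ring

lemma int_pow (n : ℕ) : Integrable (fun z : ℝ => z ^ n) gam := by
  have h : MemLp id (n : ENNReal) gam := by
    have := memLp_id_gaussianReal (μ := 0) (v := 1) (n : NNReal)
    simpa using this
  have h2 := h.integrable_norm_pow'
  refine h2.mono (by fun_prop) ?_
  filter_upwards with x
  simp

lemma int_id : Integrable (fun z : ℝ => z) gam := by simpa using int_pow 1

lemma integral_flip (F : ℝ → ℝ) : ∫ u, F (-u) ∂gam = ∫ u, F u ∂gam := by
  have h : MeasurePreserving (MeasurableEquiv.neg ℝ) gam gam := by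
    refine ⟨by fun_prop, ?_⟩
    have := gaussianReal_map_neg (μ := 0) (v := 1)
    simpa using this
  exact h.integral_comp' F

lemma integral_one' : ∫ z, z ∂gam = 0 := by
  have := integral_flip (fun z => z)
  rw [integral_neg] at this
  linarith

lemma integral_three : ∫ z, z ^ 3 ∂gam = 0 := by
  have := integral_flip (fun z => z ^ 3)
  simp only [Odd.neg_pow (by decide : Odd 3)] at this
  rw [integral_neg] at this
  linarith

lemma integral_two : ∫ z, z ^ 2 ∂gam = 1 := by
  have h := variance_eq_sub (X := id) (μ := gam) (by
    have := memLp_id_gaussianReal (μ := 0) (v := 1) 2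
    simpa using this)
  rw [variance_id_gaussianReal] at h
  have h1 := integral_one'
  simp at h
  linarith

lemma integral_abs : ∫ u, |u| ∂gam = 2 * cA := by
  rw [integral_gaussianReal_eq_integral_smul (by norm_num)]
  have : ∀ x : ℝ, gaussianPDFReal 0 1 x • |x| =
      (fun y : ℝ => cA * (y * exp (-(1 / 2) * y ^ 2))) |x| := by
    intro x
    rw [pdf_eq]
    simp only [sq_abs, smul_eq_mul]
    ring
  simp_rw [this]
  rw [integral_comp_abs (f := fun y : ℝ => cA * (y * exp (-(1 / 2) * y ^ 2))), integral_const_mul]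
  have h := integral_rpow_mul_exp_neg_mul_rpow (p := 2) (q := 1) (b := 1 / 2)
    (by norm_num) (by norm_num) (by norm_num)
  have h2 : ∫ (x : ℝ) in Set.Ioi 0, x * rexp (-(1 / 2) * x ^ 2) = 1 := by
    norm_num at h
    convert! h using 1
    · norm_num
  rw [h2]
  ring

lemma integral_tent (x : ℝ) : ∫ u : ℝ, max 0 (|x| - |u|) = x ^ 2 := by
  rw [integral_comp_abs (f := fun v => max 0 (|x| - v))]
  have h1 : ∫ v in Set.Ioi (0 : ℝ), max 0 (|x| - v) = ∫ v in Set.Ioc 0 |x|, max 0 (|x| - v) := by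
    apply setIntegral_eq_of_subset_of_forall_sdiff_eq_zero measurableSet_Ioi
    · exact Set.Ioc_subset_Ioi_self
    · rintro v ⟨hv, hv2⟩
      simp only [Set.mem_Ioi, Set.mem_Ioc, not_and, not_le] at hv hv2
      have := hv2 hv
      simp [this.le]
  have h2 : ∫ v in Set.Ioc 0 |x|, max 0 (|x| - v) = ∫ v in Set.Ioc 0 |x|, (|x| - v) := by
    apply setIntegral_congr_fun measurableSet_Ioc
    intro v hv
    simp [hv.2]
  rw [h1, h2, ← intervalIntegral.integral_of_le (abs_nonneg x)]
  rw [intervalIntegral.integral_sub (by simp) (by simp)]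
  simp
  nlinarith [sq_abs x]

lemma tent_integrable (x : ℝ) : Integrable (fun u : ℝ => max 0 (|x| - |u|)) := by
  apply Continuous.integrable_of_hasCompactSupport (by fun_prop)
  apply HasCompactSupport.of_support_subset_isCompact (isCompact_Icc (a := -|x|) (b := |x|))
  intro u hu
  rw [← Set.mem_ofPred_eq (p := fun u => u ∈ Set.Icc (-|x|) |x|)]
  simp only [Set.mem_ofPred_eq, Set.mem_Icc, ← abs_le]
  by_contra hc
  apply hu
  simp
  linarith

lemma tent_bounds (x : ℝ) :
    cA * x ^ 2 - cA * x ^ 4 / 2 ≤ ∫ u, max 0 (|x| - |u|) ∂gam ∧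
    ∫ u, max 0 (|x| - |u|) ∂gam ≤ cA * x ^ 2 := by
  rw [integral_gaussianReal_eq_integral_smul (by norm_num)]
  have hub : ∀ u : ℝ, gaussianPDFReal 0 1 u • max 0 (|x| - |u|) ≤ cA * max 0 (|x| - |u|) := by
    intro u
    rw [smul_eq_mul, pdf_eq]
    have : exp (-(1 / 2) * u ^ 2) ≤ 1 := Real.exp_le_one_iff.2 (by nlinarith [sq_nonneg u])
    have h0 : 0 ≤ max 0 (|x| - |u|) := le_max_left _ _
    gcongr
    nlinarith [cA_pos]
  have hlb : ∀ u : ℝ, (cA * (1 - x ^ 2 / 2)) * max 0 (|x| - |u|) ≤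
      gaussianPDFReal 0 1 u • max 0 (|x| - |u|) := by
    intro u
    rw [smul_eq_mul, pdf_eq]
    rcases le_total |u| |x| with h | h
    · have h0 : 0 ≤ max 0 (|x| - |u|) := le_max_left _ _
      have h1 := Real.add_one_le_exp (-(1 / 2) * u ^ 2)
      have h2 : u ^ 2 ≤ x ^ 2 := sq_le_sq.2 h
      have := cA_pos
      gcongr
      linarith
    · have : max 0 (|x| - |u|) = 0 := by simp [h]
      simp [this]
  have hI := tent_integrable x
  have hIntg : Integrable (fun u : ℝ => gaussianPDFReal 0 1 u • max 0 (|x| - |u|)) := by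
    refine (hI.const_mul cA).mono ?_ ?_
    · have : Measurable (gaussianPDFReal 0 1) := measurable_gaussianPDFReal 0 1
      exact (this.smul (by fun_prop)).aestronglyMeasurable
    · filter_upwards with u
      have h0 : 0 ≤ max 0 (|x| - |u|) := le_max_left _ _
      have h1 : 0 ≤ gaussianPDFReal 0 1 u := gaussianPDFReal_nonneg 0 1 u
      rw [Real.norm_of_nonneg (by rw [smul_eq_mul]; positivity),
        Real.norm_of_nonneg (mul_nonneg cA_pos.le h0)]
      exact hub u
  constructor
  · have := integral_mono (hI.const_mul (cA * (1 - x ^ 2 / 2))) hIntg hlb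
    rw [integral_const_mul, integral_tent] at this
    linarith
  · have := integral_mono hIntg (hI.const_mul cA) hub
    rw [integral_const_mul, integral_tent] at this
    exact this

/-- the smoothed ReLU -/
def gR (x : ℝ) : ℝ := ∫ u, relu (u + x) ∂gam

lemma relu_eq (t : ℝ) : relu t = (t + |t|) / 2 := by
  unfold relu
  rcases le_total 0 t with h | h
  · rw [max_eq_right h, abs_of_nonneg h]; ring
  · rw [max_eq_left h, abs_of_nonpos h]; ring

lemma relu_nonneg (t : ℝ) : 0 ≤ relu t := le_max_left _ _

@[fun_prop]
lemma relu_cont : Continuous relu := by unfold relu; fun_prop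

lemma int_relu (x : ℝ) : Integrable (fun u => relu (u + x)) gam := by
  simp_rw [relu_eq]
  have h : Integrable (fun u : ℝ => u + x) gam := int_id.add (integrable_const x)
  exact (h.add h.abs).div_const 2

lemma gR_eq (x : ℝ) : gR x = x / 2 + cA + (∫ u, max 0 (|x| - |u|) ∂gam) / 2 := by
  have h : Integrable (fun u : ℝ => u + x) gam := int_id.add (integrable_const x)
  have h' : Integrable (fun u : ℝ => -u + x) gam := int_id.neg.add (integrable_const x)
  have hx : ∫ u, (u + x) ∂gam = x := by
    rw [integral_add int_id (integrable_const x), integral_one']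
    simp
  have hA : ∫ u, |u + x| ∂gam = 2 * cA + ∫ u, max 0 (|x| - |u|) ∂gam := by
    have h1 := integral_flip (fun u => |u + x|)
    have hT : Integrable (fun u : ℝ => max 0 (|x| - |u|)) gam :=
      (integrable_const 0).sup ((integrable_const |x|).sub int_id.abs)
    have h2 : ∫ u, (|u + x| + |-u + x|) ∂gam
        = ∫ u, (2 * |u| + 2 * max 0 (|x| - |u|)) ∂gam := by
      congr 1
      ext u
      rcases max_cases 0 (|x| - |u|) with ⟨h, _⟩ | ⟨h, _⟩ <;> rw [h] <;>
      rcases abs_cases u with ⟨h1, _⟩ | ⟨h1, _⟩ <;>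
      rcases abs_cases x with ⟨h2, _⟩ | ⟨h2, _⟩ <;>
      rcases abs_cases (u + x) with ⟨h3, _⟩ | ⟨h3, _⟩ <;>
      rcases abs_cases (-u + x) with ⟨h4, _⟩ | ⟨h4, _⟩ <;> linarith
    rw [integral_add h.abs h'.abs, integral_add (int_id.abs.const_mul 2) (hT.const_mul 2),
      integral_const_mul, integral_const_mul, integral_abs] at h2
    linarith
  unfold gR
  simp_rw [relu_eq]
  rw [integral_div, integral_add h h.abs, hx, hA]
  ring

/-- the cubic Taylor polynomial of `gR ^ 2` -/
def tP (x : ℝ) : ℝ := cA ^ 2 + cA * x + (1 / 4 + cA ^ 2) * x ^ 2 + cA / 2 * x ^ 3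

lemma gR_sq_bound (x : ℝ) : |gR x ^ 2 - tP x| ≤ 2 * x ^ 4 + 2 * x ^ 8 := by
  obtain ⟨h1, h2⟩ := tent_bounds x
  have hg := gR_eq x
  set W := ∫ u, max 0 (|x| - |u|) ∂gam
  obtain ⟨r, hr⟩ : ∃ r, W = cA * x ^ 2 - 2 * r := ⟨(cA * x ^ 2 - W) / 2, by ring⟩
  have ha := cA_pos
  have ha1 := cA_le_one
  have hr0 : 0 ≤ r := by linarith
  have hx4 : 0 ≤ x ^ 4 := by positivity
  have hr1 : r ≤ x ^ 4 / 4 := by nlinarith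
  set Q := x / 2 + cA + cA * x ^ 2 / 2 with hQ
  have hgQ : gR x = Q - r := by rw [hg, hr, hQ]; ring
  have hQ1 : |Q| ≤ 2 + x ^ 2 := by
    have : cA * x ^ 2 ≤ 1 * x ^ 2 := by gcongr
    have h3 : 0 ≤ cA * x ^ 2 := by positivity
    rw [abs_le]
    constructor <;> nlinarith [sq_nonneg (x - 1), sq_nonneg (x + 1)]
  have e : gR x ^ 2 - tP x = cA ^ 2 * x ^ 4 / 4 - 2 * Q * r + r ^ 2 := by
    rw [hgQ, tP, hQ]; ring
  have hQr : |2 * Q * r| ≤ 2 * (2 + x ^ 2) * (x ^ 4 / 4) := by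
    rw [abs_mul, abs_mul, abs_of_nonneg hr0, abs_two]
    gcongr
  have hr2 : r ^ 2 ≤ (x ^ 4 / 4) ^ 2 := by gcongr
  have hc : cA ^ 2 * x ^ 4 ≤ 1 * x ^ 4 := by
    gcongr
    nlinarith
  have hc0 : 0 ≤ cA ^ 2 * x ^ 4 := by positivity
  have h6 : 2 * x ^ 6 ≤ x ^ 4 + x ^ 8 := by nlinarith [sq_nonneg (x ^ 2 - x ^ 4)]
  have h8 : 0 ≤ x ^ 8 := by positivity
  obtain ⟨hl, hu⟩ := abs_le.1 hQr
  rw [e, abs_le]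
  constructor <;> nlinarith [sq_nonneg r]

lemma gR_meas : StronglyMeasurable gR := by
  unfold gR
  have : Continuous (fun p : ℝ × ℝ => relu (p.2 + p.1)) := by fun_prop
  exact this.stronglyMeasurable.integral_prod_right'

lemma int_tP (t : ℝ) : Integrable (fun z => tP (t * z)) gam := by
  unfold tP
  simp_rw [mul_pow]
  exact (((integrable_const _).add ((int_id.const_mul t).const_mul _)).add
    (((int_pow 2).const_mul _).const_mul _)).add (((int_pow 3).const_mul _).const_mul _)

lemma integral_tP (t : ℝ) :
    ∫ z, tP (t * z) ∂gam = cA ^ 2 + (1 / 4 + cA ^ 2) * t ^ 2 := by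
  unfold tP
  simp_rw [mul_pow]
  have i1 := (int_id.const_mul t).const_mul cA
  have i2 := ((int_pow 2).const_mul (t ^ 2)).const_mul (1 / 4 + cA ^ 2)
  have i3 := ((int_pow 3).const_mul (t ^ 3)).const_mul (cA / 2)
  have i0 : Integrable (fun _ : ℝ => cA ^ 2) gam := integrable_const _
  have i01 : Integrable (fun z : ℝ => cA ^ 2 + cA * (t * z)) gam := i0.add i1
  have i02 : Integrable (fun z : ℝ => cA ^ 2 + cA * (t * z) +
      (1 / 4 + cA ^ 2) * (t ^ 2 * z ^ 2)) gam := i01.add i2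
  rw [integral_add i02 i3, integral_add i01 i2, integral_add i0 i1]
  have e1 : ∫ z, t * z ∂gam = 0 := by
    rw [integral_const_mul t (fun z : ℝ => z), integral_one', mul_zero]
  simp only [integral_const_mul, e1, integral_two, integral_three]
  simp

lemma int_err (t : ℝ) : Integrable (fun z : ℝ => 2 * (t * z) ^ 4 + 2 * (t * z) ^ 8) gam := by
  simp_rw [mul_pow]
  exact (((int_pow 4).const_mul _).const_mul _).add (((int_pow 8).const_mul _).const_mul _)

lemma int_gR_sub (t : ℝ) : Integrable (fun z => gR (t * z) ^ 2 - tP (t * z)) gam := by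
  refine (int_err t).mono' ?_ ?_
  · refine AEStronglyMeasurable.sub ?_ (int_tP t).1
    exact ((gR_meas.comp_measurable (measurable_const_mul t)).pow 2).aestronglyMeasurable
  · filter_upwards with z
    exact gR_sq_bound (t * z)

lemma int_gR (t : ℝ) : Integrable (fun z => gR (t * z) ^ 2) gam := by
  have := (int_gR_sub t).add (int_tP t)
  refine this.congr ?_
  filter_upwards with z
  simp

/-- the constant in the expansion -/
def cK : ℝ := ∫ z, (2 * z ^ 4 + 2 * z ^ 8) ∂gam

lemma cK_nonneg : 0 ≤ cK := integral_nonneg fun z => by positivity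

lemma gR_expansion (t : ℝ) (ht : t ^ 2 ≤ 1) :
    |∫ z, gR (t * z) ^ 2 ∂gam - (cA ^ 2 + (1 / 4 + cA ^ 2) * t ^ 2)| ≤ t ^ 4 * cK := by
  rw [← integral_tP, ← integral_sub (int_gR t) (int_tP t), cK, ← integral_const_mul]
  refine (abs_integral_le_integral_abs).trans ?_
  refine integral_mono (int_gR_sub t).abs ?_ ?_
  · have := int_err 1
    simp only [one_mul] at this
    exact this.const_mul _
  · intro z
    refine (gR_sq_bound (t * z)).trans ?_
    have h4 : t ^ 4 ≤ 1 := by nlinarith [sq_nonneg t]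
    have h8 : t ^ 8 ≤ t ^ 4 := by nlinarith [sq_nonneg (t ^ 2)]
    have hz : 0 ≤ z ^ 8 := by positivity
    have h : t ^ 8 * z ^ 8 ≤ t ^ 4 * z ^ 8 := by gcongr
    simp only [mul_pow]
    linarith

lemma fubini3 (t : ℝ) :
    ∫ u, relu (u 0 + t * u 2) * relu (u 1 + t * u 2) ∂stdGaussian3 =
      ∫ z, gR (t * z) ^ 2 ∂gam := by
  have hmp := measurePreserving_piFinSuccAbove (fun _ : Fin 3 => gam) 2
  have hmp2 := (MeasurePreserving.id gam).prod (measurePreserving_finTwoArrow gam)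
  have hmp3 : MeasurePreserving
      ((MeasurableEquiv.piFinSuccAbove (fun _ : Fin 3 => ℝ) 2).trans
        ((MeasurableEquiv.refl ℝ).prodCongr MeasurableEquiv.finTwoArrow))
      stdGaussian3 (gam.prod (gam.prod gam)) := hmp2.comp hmp
  have h1 := hmp3.integral_comp'
    (fun p : ℝ × ℝ × ℝ => relu (p.2.1 + t * p.1) * relu (p.2.2 + t * p.1))
  have hi (z : ℝ) : ∫ y : ℝ × ℝ, relu (y.1 + t * z) * relu (y.2 + t * z) ∂(gam.prod gam)
      = gR (t * z) ^ 2 := by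
    rw [integral_prod_mul (fun y => relu (y + t * z)) (fun y => relu (y + t * z)), sq]
    rfl
  have hIntg : Integrable (fun p : ℝ × ℝ × ℝ => relu (p.2.1 + t * p.1) * relu (p.2.2 + t * p.1))
      (gam.prod (gam.prod gam)) := by
    rw [integrable_prod_iff (Continuous.aestronglyMeasurable (by fun_prop))]
    constructor
    · filter_upwards with z
      exact (int_relu (t * z)).mul_prod (int_relu (t * z))
    · refine (int_gR t).congr ?_
      filter_upwards with z
      rw [← hi]
      congr 1
      ext y
      rw [Real.norm_of_nonneg (mul_nonneg (relu_nonneg _) (relu_nonneg _))]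
  rw [integral_prod _ hIntg] at h1
  simp only [hi] at h1
  rw [← h1]
  rfl

lemma kernel_eq (ρ : ℝ) (h0 : 0 ≤ ρ) (h1 : ρ < 1) :
    reluKernel ρ = (1 - ρ) * ∫ z, gR (√(ρ / (1 - ρ)) * z) ^ 2 ∂gam := by
  have hc : 0 < 1 - ρ := by linarith
  have hs : 0 < √(1 - ρ) := Real.sqrt_pos.2 hc
  have key : ∀ a b : ℝ, relu (√(1 - ρ) * a + √ρ * b)
      = √(1 - ρ) * relu (a + √(ρ / (1 - ρ)) * b) := by
    intro a b
    have : √(1 - ρ) * a + √ρ * b = √(1 - ρ) * (a + √(ρ / (1 - ρ)) * b) := by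
      rw [Real.sqrt_div h0]
      field_simp
    rw [this]
    unfold relu
    rw [mul_max_of_nonneg _ _ hs.le, mul_zero]
  rw [← fubini3, ← integral_const_mul]
  unfold reluKernel
  congr 1
  ext u
  rw [key, key]
  have := Real.mul_self_sqrt hc.le
  linear_combination
    relu (u 0 + √(ρ / (1 - ρ)) * u 2) * relu (u 1 + √(ρ / (1 - ρ)) * u 2) * this

lemma main_bound (ρ : ℝ) (hρ : ρ ∈ Set.Icc (0 : ℝ) (1 / 5)) :
    |reluKernel ρ - 1 / (2 * π) - ρ / 4| ≤ (2 * cK + 1) * ρ ^ 2 := by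
  obtain ⟨h0, h1⟩ := hρ
  have hc : 0 < 1 - ρ := by linarith
  rw [kernel_eq ρ h0 (by linarith), ← cA_sq]
  have ht : √(ρ / (1 - ρ)) ^ 2 = ρ / (1 - ρ) := Real.sq_sqrt (by positivity)
  have hle : ρ / (1 - ρ) ≤ 1 := by
    rw [div_le_one hc]; linarith
  have h := gR_expansion (√(ρ / (1 - ρ))) (by rw [ht]; exact hle)
  have ht4 : √(ρ / (1 - ρ)) ^ 4 = (ρ / (1 - ρ)) ^ 2 := by
    rw [show √(ρ / (1 - ρ)) ^ 4 = (√(ρ / (1 - ρ)) ^ 2) ^ 2 by ring, ht]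
  rw [ht, ht4] at h
  set I := ∫ z, gR (√(ρ / (1 - ρ)) * z) ^ 2 ∂gam
  have e : (1 - ρ) * I - cA ^ 2 - ρ / 4
      = (1 - ρ) * (I - (cA ^ 2 + (1 / 4 + cA ^ 2) * (ρ / (1 - ρ)))) := by
    field_simp
    ring
  rw [e, abs_mul, abs_of_pos hc]
  have hk := cK_nonneg
  calc _ ≤ (1 - ρ) * ((ρ / (1 - ρ)) ^ 2 * cK) := by gcongr
    _ = ρ ^ 2 / (1 - ρ) * cK := by field_simp
    _ ≤ 2 * ρ ^ 2 * cK := by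
      gcongr
      rw [div_le_iff₀ hc]
      nlinarith [sq_nonneg ρ]
    _ ≤ _ := by nlinarith [sq_nonneg ρ]

theorem statement_15 :
    reluKernel 0 = 1 / (2 * π) ∧
    HasDerivWithinAt reluKernel (1 / 4) (Set.Ici 0) 0 ∧
    ∃ C : ℝ, 0 < C ∧ ∀ ρ ∈ Set.Icc (0 : ℝ) (1 / 5),
      |reluKernel ρ - 1 / (2 * π) - ρ / 4| ≤ C * ρ ^ 2 := by
  have hC : 0 < 2 * cK + 1 := by linarith [cK_nonneg]
  have hz : reluKernel 0 = 1 / (2 * π) := by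
    have := main_bound 0 (by norm_num)
    simp only [zero_div, sub_zero, ne_eq, OfNat.ofNat_ne_zero, not_false_eq_true, zero_pow,
      mul_zero] at this
    have := abs_nonpos_iff.1 this
    linarith
  refine ⟨hz, ?_, _, hC, main_bound⟩
  rw [hasDerivWithinAt_iff_isLittleO]
  have hO : (fun x' => reluKernel x' - reluKernel 0 - (x' - 0) • (1 / 4 : ℝ))
      =O[nhdsWithin 0 (Set.Ici 0)] fun x' : ℝ => x' ^ 2 := by
    refine Asymptotics.IsBigO.of_bound (2 * cK + 1) ?_
    have hn : Set.Icc (0 : ℝ) (1 / 5) ∈ nhdsWithin (0 : ℝ) (Set.Ici 0) :=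
      Icc_mem_nhdsGE (by norm_num)
    filter_upwards [hn] with x hx
    have := main_bound x hx
    rw [hz, Real.norm_eq_abs, Real.norm_of_nonneg (sq_nonneg x), smul_eq_mul]
    convert this using 2
    ring
  refine hO.trans_isLittleO ?_
  have h2 : (fun x : ℝ => x ^ 2) =o[nhds 0] fun x : ℝ => x := by
    simpa using Asymptotics.isLittleO_pow_pow (𝕜 := ℝ) (m := 1) (n := 2) (by norm_num)
  simpa using h2.mono nhdsWithin_le_nhds

end
end
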